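/- The direct product ℤ × F_n of the integers with a free group of finite rank n is product separable: for any finitely many finitely generated subgroups H_1, ..., H_k of ℤ × F_n, the product H_1 H_2 ... H_k is closed in the profinite topology. Consequently, any group commensurable with ℤ × F_n (in particular any dihedral Artin group A(m) with m > 2) is product separable. -/

import Mathlib

/-! The proof is combinatorial. A finitely generated subgroup `H` of `A × F`, with `A` abelian and
`F` free, is read off the closed paths of a finite part of the Schreier graph of `H`, where a path
reads a word in the letters of `F` and carries a weight in `A`; this is a `PathSystem`. An element
lies in `H₁ ⋯ Hₖ` exactly when some polygon with prescribed sides closes up: one side runs through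
the graph of each `Hᵢ`, and the last side reads a fixed element of `F` (`exists_pathSystem`).

Let `N` be normal in `F`, and let `ker (extHom (F → F ⧸ N))` be the subgroup of those words that
traverse each edge of the Cayley graph of `F ⧸ N` an even number of times. A polygon closing up
modulo this smaller subgroup can be cut, along a vertex of the Cayley graph of `F ⧸ N` common to two
or three sides, into polygons with fewer sides that close up modulo `N` (`polygon_cut`): otherwise
the first side leaves the set of vertices common to the first and the last side, so it traverses
some boundary edge of that set an odd number of times, and no other side can compensate for this.
Iterating, and treating bigons with the action of `F` on the finitely many states, gives a finite
quotient of `F` that detects whether polygons of a given shape close up (`exists_closing`). This is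
the Ribes–Zalesskii theorem `listSep_freeGroup`.

For `ℤ × F`, the same cutting with `N = ⊥` shows that the total weights of the closed polygons of a
given shape form a finite union of cosets in `ℤ` (`isCosetUnion_sol`). Such a union is periodic
apart from finitely many points, so if `(a, g)` is not in the product then for some `m ≠ 0` no `(a', g)`
with `a' ≡ a` modulo `m` is. It then suffices to separate the image of `(a, g)` in `ℤ/m × F`, which
is virtually free (`listSep_int_prod`).

Product separability passes to subgroups and to overgroups of finite index
(`ListSep.of_injective`, `ListSep.of_finiteIndex`), which gives the claim for commensurable groups.
A dihedral Artin group has a central element `z`, a power of `s t`; the quotient by `z` maps to the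
semidirect product of a free group with its automorphisms, and a subgroup of finite index containing
`z` is mapped, with kernel generated by `z`, into the free group. The homomorphism to `ℤ` sending
`s` and `t` to `1` does not kill `z`, so that subgroup embeds in `ℤ × F` (`listSep_even`,
`listSep_odd`). -/

/-- The profinite topology on a group `G`: generated by cosets of finite-index subgroups. -/
def profiniteTopology (G : Type*) [Group G] : TopologicalSpace G :=
  TopologicalSpace.generateFrom
    {S : Set G | ∃ (H : Subgroup G) (g : G), H.FiniteIndex ∧ S = (g * ·) '' (H : Set G)}

/-- A group is product separable if every product of finitely many finitely generated
subgroups is closed in the profinite topology. -/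
def ProductSeparable (G : Type*) [Group G] : Prop :=
  ∀ (n : ℕ) (H : Fin n → Subgroup G), (∀ i, (H i).FG) →
    @IsClosed G (profiniteTopology G)
      {x : G | ∃ f : Fin n → G, (∀ i, f i ∈ H i) ∧ x = (List.ofFn f).prod}

/-- `prodWord a b m` is the alternating product `abab…` with `m` letters. -/
def prodWord {M : Type*} [Monoid M] (a b : M) (m : ℕ) : M := (a * b) ^ (m / 2) * a ^ (m % 2)

/-- The dihedral Artin group `⟨s,t ∣ prod(s,t;m) = prod(t,s;m)⟩`. -/
abbrev ArtinDihedral (m : ℕ) : Type :=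
  PresentedGroup ({ prodWord (FreeGroup.of true) (FreeGroup.of false) m *
    (prodWord (FreeGroup.of false) (FreeGroup.of true) m)⁻¹ } : Set (FreeGroup Bool))

/-! ### Polygons in Cayley graphs -/

section Cayley

variable {α G : Type} [Group G]

/-- In the Cayley graph of `G` with respect to the images of the letters under `π`, the
unoriented edge traversed by the letter `l` read from the vertex `g`. The edge `(v, a)` joins
`v` to `v * π a`, whichever way it is traversed. -/
def edgeOf (π : FreeGroup α →* G) (g : G) (l : α × Bool) : G × α :=
  (if l.2 then g else g * π (FreeGroup.mk [l]), l.1)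

/-- The number of times, modulo 2, that the path labelled by a word and starting at a given
vertex of the Cayley graph of `G` traverses each edge. -/
noncomputable def cnt (π : FreeGroup α →* G) : G → List (α × Bool) → (G × α →₀ ZMod 2)
  | _, [] => 0
  | g, l :: w => Finsupp.single (edgeOf π g l) 1 + cnt π (g * π (FreeGroup.mk [l])) w

theorem mk_cons' (l : α × Bool) (w : List (α × Bool)) :
    FreeGroup.mk (l :: w) = FreeGroup.mk [l] * FreeGroup.mk w := by
  rw [FreeGroup.mul_mk]; rfl

theorem mk_app (u v : List (α × Bool)) :
    FreeGroup.mk (u ++ v) = FreeGroup.mk u * FreeGroup.mk v := by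
  rw [FreeGroup.mul_mk]

theorem mk_nil' : FreeGroup.mk ([] : List (α × Bool)) = 1 := rfl

theorem mk_true (a : α) : FreeGroup.mk [(a, true)] = FreeGroup.of a := rfl

theorem mk_false (a : α) : FreeGroup.mk [(a, false)] = (FreeGroup.of a)⁻¹ := rfl

theorem cnt_append (π : FreeGroup α →* G) (g : G) (u v : List (α × Bool)) :
    cnt π g (u ++ v) = cnt π g u + cnt π (g * π (FreeGroup.mk u)) v := by
  induction u generalizing g with
  | nil => simp [cnt, mk_nil']
  | cons l u ih =>
    rw [List.cons_append, cnt, cnt, ih, mk_cons' l u, map_mul, ← mul_assoc, add_assoc]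

theorem cnt_ne_zero (π : FreeGroup α →* G) (g : G) (w : List (α × Bool)) (e : G × α)
    (h : cnt π g w e ≠ 0) :
    ∃ u l v, w = u ++ l :: v ∧ e = edgeOf π (g * π (FreeGroup.mk u)) l := by
  induction w generalizing g with
  | nil => simp [cnt] at h
  | cons l w ih =>
    rw [cnt, Finsupp.add_apply] at h
    by_cases he : e = edgeOf π g l
    · exact ⟨[], l, w, rfl, by simpa [mk_nil'] using he⟩
    · rw [Finsupp.single_eq_of_ne he, zero_add] at h
      obtain ⟨u, l', v, rfl, h'⟩ := ih _ h
      refine ⟨l :: u, l', v, rfl, ?_⟩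
      rw [h', mk_cons' l u, map_mul, mul_assoc]

/-- The two orientations in which a letter can traverse its edge. -/
theorem edgeOf_ends (π : FreeGroup α →* G) (g : G) (l : α × Bool) :
    ((edgeOf π g l).1 = g ∧
        (edgeOf π g l).1 * π (FreeGroup.of (edgeOf π g l).2) = g * π (FreeGroup.mk [l])) ∨
      ((edgeOf π g l).1 = g * π (FreeGroup.mk [l]) ∧
        (edgeOf π g l).1 * π (FreeGroup.of (edgeOf π g l).2) = g) := by
  obtain ⟨a, b⟩ := l
  cases b
  · right; simp [edgeOf, mk_false]
  · left; simp [edgeOf, mk_true]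

/-- A path that traverses an edge an odd number of times visits both ends of that edge. -/
theorem cnt_visits (π : FreeGroup α →* G) (g : G) (w : List (α × Bool)) (e : G × α)
    (h : cnt π g w e ≠ 0) :
    (∃ u v, w = u ++ v ∧ g * π (FreeGroup.mk u) = e.1) ∧
      (∃ u v, w = u ++ v ∧ g * π (FreeGroup.mk u) = e.1 * π (FreeGroup.of e.2)) := by
  obtain ⟨u, l, v, rfl, rfl⟩ := cnt_ne_zero π g w e h
  have h1 : ∃ u' v', u ++ l :: v = u' ++ v' ∧
      g * π (FreeGroup.mk u') = g * π (FreeGroup.mk u) := ⟨u, l :: v, rfl, rfl⟩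
  have h2 : ∃ u' v', u ++ l :: v = u' ++ v' ∧
      g * π (FreeGroup.mk u') = g * π (FreeGroup.mk u) * π (FreeGroup.mk [l]) :=
    ⟨u ++ [l], v, by simp, by rw [mk_app, map_mul, mul_assoc]⟩
  rcases edgeOf_ends π (g * π (FreeGroup.mk u)) l with ⟨e1, e2⟩ | ⟨e1, e2⟩
  · rw [e2, e1]; exact ⟨h1, h2⟩
  · rw [e2, e1]; exact ⟨h2, h1⟩

/-- A path leading out of a set `C` of vertices crosses the boundary of `C` an odd number of
times, so it traverses some boundary edge an odd number of times. -/
theorem exists_crossing (π : FreeGroup α →* G) (C : Set G) (g : G) (w : List (α × Bool))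
    (h0 : g ∈ C) (h1 : g * π (FreeGroup.mk w) ∉ C) :
    ∃ e, cnt π g w e ≠ 0 ∧ ¬ (e.1 ∈ C ↔ e.1 * π (FreeGroup.of e.2) ∈ C) := by
  classical
  let χ : G → ZMod 2 := fun x => if x ∈ C then 1 else 0
  let Φ := Finsupp.linearCombination (ZMod 2)
    (fun e : G × α => χ e.1 + χ (e.1 * π (FreeGroup.of e.2)))
  have key : ∀ (w : List (α × Bool)) (g : G),
      Φ (cnt π g w) = χ g + χ (g * π (FreeGroup.mk w)) := by
    intro w
    induction w with
    | nil => intro g; simp [cnt, mk_nil', CharTwo.add_self_eq_zero]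
    | cons l w ih =>
      intro g
      have e : Φ (Finsupp.single (edgeOf π g l) 1) = χ g + χ (g * π (FreeGroup.mk [l])) := by
        simp only [Φ, Finsupp.linearCombination_single, one_smul]
        rcases edgeOf_ends π g l with ⟨e1, e2⟩ | ⟨e1, e2⟩
        · rw [e2, e1]
        · rw [e2, e1, add_comm]
      rw [cnt, map_add, e, ih, mk_cons' l w, map_mul, mul_assoc, add_assoc,
        ← add_assoc (χ (g * π (FreeGroup.mk [l]))), CharTwo.add_self_eq_zero, zero_add]
  by_contra! H
  have h2 : Φ (cnt π g w) = 0 := by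
    rw [Finsupp.linearCombination_apply, Finsupp.sum]
    refine Finset.sum_eq_zero fun e he => ?_
    have := H e (Finsupp.mem_support_iff.1 he)
    have h3 : χ e.1 = χ (e.1 * π (FreeGroup.of e.2)) := by simp only [χ, this]
    rw [← h3, CharTwo.add_self_eq_zero, smul_zero]
  rw [key] at h2
  simp [χ, h0, h1] at h2

/-- The step along the generator `a` in `G × (G × α →₀ ZMod 2)`: move the vertex, and record
the traversed edge. -/
noncomputable def extStep (π : FreeGroup α →* G) (a : α) :
    Equiv.Perm (G × (G × α →₀ ZMod 2)) where
  toFun x := (x.1 * π (FreeGroup.of a), x.2 + Finsupp.single (x.1, a) 1)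
  invFun x := (x.1 * (π (FreeGroup.of a))⁻¹,
    x.2 + Finsupp.single (x.1 * (π (FreeGroup.of a))⁻¹, a) 1)
  left_inv x := by
    ext1
    · simp
    · simp [add_assoc, ← Finsupp.single_add, CharTwo.add_self_eq_zero]
  right_inv x := by
    ext1
    · simp
    · simp [add_assoc, ← Finsupp.single_add, CharTwo.add_self_eq_zero]

/-- The extension of `G` by an elementary abelian `2`-group in which the value of a word records
its value in `G` together with the parity of the number of traversals of each edge of the Cayley
graph of `G`. It is realised by permutations; the opposite group makes words act from the
right. -/
noncomputable def extHom (π : FreeGroup α →* G) :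
    FreeGroup α →* (Equiv.Perm (G × (G × α →₀ ZMod 2)))ᵐᵒᵖ :=
  FreeGroup.lift fun a => MulOpposite.op (extStep π a)

theorem extHom_apply (π : FreeGroup α →* G) (w : List (α × Bool)) (g : G)
    (f : G × α →₀ ZMod 2) :
    (extHom π (FreeGroup.mk w)).unop (g, f) = (g * π (FreeGroup.mk w), f + cnt π g w) := by
  induction w generalizing g f with
  | nil => simp [cnt, mk_nil']
  | cons l w ih =>
    have hl : (extHom π (FreeGroup.mk [l])).unop (g, f) =
        (g * π (FreeGroup.mk [l]), f + Finsupp.single (edgeOf π g l) 1) := by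
      obtain ⟨a, b⟩ := l
      cases b
      · rw [mk_false, map_inv, extHom, FreeGroup.lift_apply_of]
        simp only [edgeOf, mk_false, map_inv]
        rfl
      · rw [mk_true, extHom, FreeGroup.lift_apply_of]
        rfl
    rw [mk_cons' l w, map_mul, MulOpposite.unop_mul, Equiv.Perm.mul_apply, hl, ih, map_mul,
      mul_assoc, cnt, add_assoc]

/-- A word trivial in the extension is trivial in `G` and traverses every edge an even number of
times. -/
theorem ker_extHom (π : FreeGroup α →* G) (w : List (α × Bool))
    (h : FreeGroup.mk w ∈ (extHom π).ker) (g : G) :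
    π (FreeGroup.mk w) = 1 ∧ cnt π g w = 0 := by
  have := extHom_apply π w g 0
  rw [MonoidHom.mem_ker.1 h] at this
  simp only [MulOpposite.unop_one, Equiv.Perm.coe_one, id_eq, zero_add, Prod.mk.injEq] at this
  exact ⟨by simpa using this.1, this.2.symm⟩

/-- Cutting a polygon. The closed path `w₁ w₂ W wₙ` traverses every edge an even number of
times, so either some vertex of the side `w₁` lies on `W`, or some vertex of `w₁` lies on both
of the neighbouring sides `w₂` and `wₙ`. -/
theorem polygon_cut (π : FreeGroup α →* G) (w1 w2 W wn : List (α × Bool))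
    (h : FreeGroup.mk (w1 ++ (w2 ++ (W ++ wn))) ∈ (extHom π).ker) :
    (W ≠ [] ∧ ∃ a b c d, w1 = a ++ b ∧ W = c ++ d ∧
      π (FreeGroup.mk a) = π (FreeGroup.mk (w1 ++ (w2 ++ c)))) ∨
    (∃ a b c d e f, w1 = a ++ b ∧ w2 = c ++ d ∧ wn = e ++ f ∧
      π (FreeGroup.mk a) = π (FreeGroup.mk (w1 ++ c)) ∧
      π (FreeGroup.mk a) = π (FreeGroup.mk (w1 ++ (w2 ++ (W ++ e))))) := by
  obtain ⟨ht, hc⟩ := ker_extHom π _ h 1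
  by_contra! ⟨hA, hB⟩
  -- `C` is the set of vertices common to the sides `w₁` and `wₙ`.
  let C : Set G := {v | (∃ a b, w1 = a ++ b ∧ π (FreeGroup.mk a) = v) ∧
    ∃ e f, wn = e ++ f ∧ π (FreeGroup.mk (w1 ++ (w2 ++ (W ++ e)))) = v}
  obtain ⟨e, he, heC⟩ := exists_crossing π C 1 w1
    ⟨⟨[], w1, rfl, by simp [mk_nil']⟩, ⟨wn, [], by simp, ht⟩⟩ (by
      rintro ⟨-, x, y, hxy, hx⟩
      rw [one_mul] at hx
      exact hB w1 [] [] w2 x y (by simp) rfl hxy (by simp) hx.symm)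
  have v1 := cnt_visits π 1 w1 e he
  simp only [one_mul] at v1
  rw [cnt_append, cnt_append, cnt_append] at hc
  have hce := DFunLike.congr_fun hc e
  simp only [Finsupp.add_apply, Finsupp.zero_apply, one_mul, ← map_mul, ← mk_app,
    List.append_assoc] at hce
  by_cases h2 : cnt π (π (FreeGroup.mk w1)) w2 e = 0
  · by_cases h3 : cnt π (π (FreeGroup.mk (w1 ++ w2))) W e = 0
    · by_cases h4 : cnt π (π (FreeGroup.mk (w1 ++ (w2 ++ W)))) wn e = 0
      · rw [h2, h3, h4] at hce
        exact he (by simpa using hce)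
      · have v4 := cnt_visits π _ wn e h4
        simp only [← map_mul, ← mk_app, List.append_assoc] at v4
        exact heC ⟨fun _ => ⟨v1.2, v4.2⟩, fun _ => ⟨v1.1, v4.1⟩⟩
    · obtain ⟨⟨c, d, hcd, hv⟩, -⟩ := cnt_visits π _ W e h3
      obtain ⟨⟨a, b, hab, hv'⟩, -⟩ := v1
      refine hA ?_ a b c d hab hcd ?_
      · rintro rfl; simp [cnt] at h3
      · rw [hv', ← hv, ← map_mul, ← mk_app, List.append_assoc]
  · have v2 := cnt_visits π _ w2 e h2
    simp only [← map_mul, ← mk_app] at v2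
    have : ∀ v ∈ C, (∃ c d, w2 = c ++ d ∧ π (FreeGroup.mk (w1 ++ c)) = v) → False := by
      rintro v ⟨⟨a, b, hab, rfl⟩, x, y, hxy, hx⟩ ⟨c, d, hcd, hc⟩
      exact hB a b c d x y hab hcd hxy hc.symm hx.symm
    exact heC ⟨fun h => (this _ h v2.1).elim, fun h => (this _ h v2.2).elim⟩

end Cayley

/-! ### Path systems -/

section PathSystems

/-- A system of paths between the states in `V`. Here `T p w c q` says that some path from `p` to
`q` reads the word `w` and has weight `c` in the abelian group `A`. Paths can be composed, cut and
reversed, and a path reading a word trivial in the free group can be replaced by one reading the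
empty word. The last property replaces determinism of a folded automaton; the empty word may
join distinct states and may carry a nontrivial weight. -/
structure PathSystem (α A V : Type) [CommGroup A] where
  T : V → List (α × Bool) → A → V → Prop
  refl : ∀ p, T p [] 1 p
  glue : ∀ {p u c r v d q}, T p u c r → T r v d q → T p (u ++ v) (c * d) q
  split : ∀ {p u v c q}, T p (u ++ v) c q → ∃ r c1 c2, T p u c1 r ∧ T r v c2 q ∧ c = c1 * c2
  inv : ∀ {p w c q}, T p w c q → T q (FreeGroup.invRev w) c⁻¹ p
  triv : ∀ {p w c q}, T p w c q → FreeGroup.mk w = 1 → T p [] c q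

namespace PathSystem

variable {α A V : Type} [CommGroup A] (M : PathSystem α A V)

/-- `M.Rel P W c`: there are paths, one between each pair of states in the list `P`, such that
the concatenation of the words read is `W` and the product of the weights is `c`. -/
def Rel : List (V × V) → List (α × Bool) → A → Prop
  | [], W, c => W = [] ∧ c = 1
  | p :: P, W, c => ∃ w c1 W' c2, M.T p.1 w c1 p.2 ∧ Rel P W' c2 ∧ W = w ++ W' ∧ c = c1 * c2

theorem rel_append (P Q : List (V × V)) (W : List (α × Bool)) (c : A) :
    M.Rel (P ++ Q) W c ↔
      ∃ W1 c1 W2 c2, M.Rel P W1 c1 ∧ M.Rel Q W2 c2 ∧ W = W1 ++ W2 ∧ c = c1 * c2 := by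
  induction P generalizing W c with
  | nil =>
    constructor
    · intro h
      exact ⟨[], 1, W, c, ⟨rfl, rfl⟩, h, rfl, (one_mul c).symm⟩
    · rintro ⟨_, _, W2, c2, ⟨rfl, rfl⟩, h, rfl, rfl⟩
      simpa using h
  | cons p P ih =>
    constructor
    · rintro ⟨w, c1, W', c2, hT, hR, rfl, rfl⟩
      obtain ⟨W1, d1, W2, d2, h1, h2, rfl, rfl⟩ := (ih _ _).1 hR
      exact ⟨w ++ W1, c1 * d1, W2, d2, ⟨w, c1, W1, d1, hT, h1, rfl, rfl⟩, h2,
        by simp, by rw [mul_assoc]⟩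
    · rintro ⟨W1, c1, W2, c2, ⟨w, d1, W', d2, hT, hR, rfl, rfl⟩, h2, rfl, rfl⟩
      exact ⟨w, d1, W' ++ W2, d2 * c2, hT, (ih _ _).2 ⟨_, _, _, _, hR, h2, rfl, rfl⟩,
        by simp, by rw [mul_assoc]⟩

theorem rel_cons (p : V × V) (P : List (V × V)) (W : List (α × Bool)) (c : A) :
    M.Rel (p :: P) W c ↔
      ∃ w c1 W' c2, M.T p.1 w c1 p.2 ∧ M.Rel P W' c2 ∧ W = w ++ W' ∧ c = c1 * c2 := Iff.rfl

theorem rel_single (p : V × V) (W : List (α × Bool)) (c : A) :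
    M.Rel [p] W c ↔ M.T p.1 W c p.2 := by
  constructor
  · rintro ⟨w, c1, _, _, hT, ⟨rfl, rfl⟩, rfl, rfl⟩
    simpa using hT
  · intro h
    exact ⟨W, c, [], 1, h, ⟨rfl, rfl⟩, by simp, by simp⟩

/-- Cutting a nonempty chain of paths at a position of the word it reads cuts one of the paths at
an intermediate state `r`. -/
theorem rel_split (P : List (V × V)) (hP : P ≠ []) (W1 W2 : List (α × Bool)) (c : A)
    (h : M.Rel P (W1 ++ W2) c) :
    ∃ P1 p P2 r c1 c2, P = P1 ++ p :: P2 ∧ M.Rel (P1 ++ [(p.1, r)]) W1 c1 ∧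
      M.Rel ((r, p.2) :: P2) W2 c2 ∧ c = c1 * c2 := by
  induction P generalizing W1 W2 c with
  | nil => exact absurd rfl hP
  | cons p P ih =>
    obtain ⟨w, c1, W', c2, hT, hR, hW, rfl⟩ := h
    have first : ∀ x, w = W1 ++ x → W2 = x ++ W' → ∃ P1 p' P2 r d1 d2,
        p :: P = P1 ++ p' :: P2 ∧ M.Rel (P1 ++ [(p'.1, r)]) W1 d1 ∧
        M.Rel ((r, p'.2) :: P2) W2 d2 ∧ c1 * c2 = d1 * d2 := by
      rintro x rfl rfl
      obtain ⟨r, d1, d2, h1, h2, rfl⟩ := M.split hT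
      exact ⟨[], p, P, r, d1, d2 * c2, rfl, (M.rel_single _ _ _).2 h1,
        ⟨x, d2, W', c2, h2, hR, rfl, rfl⟩, mul_assoc _ _ _⟩
    rcases List.append_eq_append_iff.1 hW with ⟨x, h1, h2⟩ | ⟨x, h1, h2⟩
    · exact first x h1 h2
    · by_cases hP' : P = []
      · subst hP'
        obtain ⟨rfl, rfl⟩ := hR
        obtain ⟨rfl, rfl⟩ := List.append_eq_nil_iff.1 h2.symm
        exact first [] (by simpa using h1.symm) rfl
      · subst h1 h2
        obtain ⟨P1, p', P2, r, d1, d2, rfl, h3, h4, rfl⟩ := ih hP' _ _ _ hR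
        exact ⟨p :: P1, p', P2, r, c1 * d1, d2, rfl, ⟨w, c1, x, d1, hT, h3, rfl, rfl⟩, h4,
          (mul_assoc _ _ _).symm⟩

/-- The total weights of polygons with sides of the shape `P` that close up modulo `N`. -/
def Sol (N : Subgroup (FreeGroup α)) (P : List (V × V)) : Set A :=
  {c | ∃ W, M.Rel P W c ∧ FreeGroup.mk W ∈ N}

theorem sol_mono {N N' : Subgroup (FreeGroup α)} (h : N ≤ N') (P : List (V × V)) :
    M.Sol N P ⊆ M.Sol N' P := fun _ ⟨W, h1, h2⟩ => ⟨W, h1, h h2⟩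

/-- `polygon_cut` for polygons made of paths of the system: a polygon closing up modulo the smaller
subgroup is cut into two or three polygons closing up modulo `N`, and the weights multiply. -/
theorem sol_cut (N : Subgroup (FreeGroup α)) [N.Normal] (P1 P2 Pn : V × V) (mid : List (V × V))
    (c : A) (h : c ∈ M.Sol (extHom (QuotientGroup.mk' N)).ker (P1 :: P2 :: (mid ++ [Pn]))) :
    (∃ m1 Pj m2 r r' c1 c2, mid = m1 ++ Pj :: m2 ∧
      c1 ∈ M.Sol N ((r, P1.2) :: P2 :: (m1 ++ [(Pj.1, r')])) ∧
      c2 ∈ M.Sol N ((P1.1, r) :: (r', Pj.2) :: (m2 ++ [Pn])) ∧ c = c1 * c2) ∨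
    (∃ r1 r2 rn c1 c2 c3, c1 ∈ M.Sol N [(r1, P1.2), (P2.1, r2)] ∧
      c2 ∈ M.Sol N [(P1.1, r1), (rn, Pn.2)] ∧
      c3 ∈ M.Sol N ((r2, P2.2) :: (mid ++ [(Pn.1, rn)])) ∧ c = c1 * (c2 * c3)) := by
  obtain ⟨_, ⟨w1, c1, _, _, hT1, ⟨w2, c2, _, _, hT2, hR, rfl, rfl⟩, rfl, rfl⟩, hN⟩ := h
  obtain ⟨W, cW, wn, cn, hW, hn, rfl, rfl⟩ := (M.rel_append _ _ _ _).1 hR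
  rw [M.rel_single] at hn
  have htot := (ker_extHom _ _ hN 1).1
  have mem : ∀ w, FreeGroup.mk w ∈ N ↔ QuotientGroup.mk' N (FreeGroup.mk w) = 1 := fun w =>
    (QuotientGroup.eq_one_iff _).symm
  rcases polygon_cut _ w1 w2 W wn hN with
    ⟨hne, a, b, e, d, rfl, rfl, hv⟩ | ⟨a, b, e, d, e', f, rfl, rfl, rfl, hv, hv'⟩
  · left
    have hmid : mid ≠ [] := by
      rintro rfl; exact hne hW.1
    obtain ⟨m1, Pj, m2, r', d1, d2, rfl, h1, h2, rfl⟩ := M.rel_split _ hmid _ _ _ hW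
    obtain ⟨r, k1, k2, g1, g2, rfl⟩ := M.split hT1
    refine ⟨m1, Pj, m2, r, r', k2 * (c2 * d1), k1 * (d2 * cn), rfl,
      ⟨b ++ (w2 ++ e), ⟨_, _, _, _, g2, ⟨_, _, _, _, hT2, h1, rfl, rfl⟩, rfl, rfl⟩, ?_⟩,
      ⟨a ++ (d ++ wn), ⟨_, _, _, _, g1, ?_, rfl, rfl⟩, ?_⟩, ?_⟩
    · rw [mem]
      simp only [mk_app, map_mul, mul_assoc] at hv ⊢
      exact (left_eq_mul.1 hv)
    · rw [← List.cons_append, rel_append]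
      exact ⟨_, _, _, _, h2, (M.rel_single _ _ _).2 hn, rfl, rfl⟩
    · rw [mem]
      simp only [mk_app, map_mul] at hv htot ⊢
      rw [← htot]
      conv_lhs => rw [hv]
      simp only [mul_assoc]
    · simp only [mul_left_comm, mul_comm]
  · right
    obtain ⟨r1, k1, k2, g1, g2, rfl⟩ := M.split hT1
    obtain ⟨r2, l1, l2, g3, g4, rfl⟩ := M.split hT2
    obtain ⟨rn, n1, n2, g5, g6, rfl⟩ := M.split hn
    refine ⟨r1, r2, rn, k2 * l1, k1 * n2, l2 * (cW * n1),
      ⟨b ++ e, ⟨_, _, _, _, g2, (M.rel_single _ _ _).2 g3, rfl, rfl⟩, ?_⟩,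
      ⟨a ++ f, ⟨_, _, _, _, g1, (M.rel_single _ _ _).2 g6, rfl, rfl⟩, ?_⟩,
      ⟨d ++ (W ++ e'), ⟨_, _, _, _, g4, (M.rel_append _ _ _ _).2
        ⟨_, _, _, _, hW, (M.rel_single _ _ _).2 g5, rfl, rfl⟩, rfl, rfl⟩, ?_⟩, ?_⟩
    · rw [mem]
      simp only [mk_app, map_mul, mul_assoc] at hv ⊢
      exact (left_eq_mul.1 hv)
    · rw [mem]
      simp only [mk_app, map_mul] at hv' htot ⊢
      rw [← htot]
      conv_lhs => rw [hv']
      simp only [mul_assoc]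
    · rw [mem]
      simp only [mk_app, map_mul] at hv hv' ⊢
      rw [← mul_right_inj (QuotientGroup.mk' N (FreeGroup.mk a)), mul_one]
      conv_lhs => rw [hv]
      conv_rhs => rw [hv']
      simp only [mul_assoc]
    · simp only [mul_left_comm, mul_comm]

/-- Converse of the first case of `sol_cut` in the free group. -/
theorem sol_glue (P1 P2 Pn Pj : V × V) (m1 m2 : List (V × V)) (r r' : V) (c1 c2 : A)
    (h1 : c1 ∈ M.Sol ⊥ ((r, P1.2) :: P2 :: (m1 ++ [(Pj.1, r')])))
    (h2 : c2 ∈ M.Sol ⊥ ((P1.1, r) :: (r', Pj.2) :: (m2 ++ [Pn]))) :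
    c1 * c2 ∈ M.Sol ⊥ (P1 :: P2 :: ((m1 ++ Pj :: m2) ++ [Pn])) := by
  obtain ⟨_, ⟨b, cb, _, _, hb, ⟨w2, d2, _, _, hw2, hR, rfl, rfl⟩, rfl, rfl⟩, hN⟩ := h1
  obtain ⟨W1, e1, c, cc, hW1, hc, rfl, rfl⟩ := (M.rel_append _ _ _ _).1 hR
  rw [rel_single] at hc
  obtain ⟨_, ⟨a, ca, _, _, ha, ⟨d, cd, W2, e2, hd, hR2, rfl, rfl⟩, rfl, rfl⟩, hN2⟩ := h2
  refine ⟨(a ++ b) ++ (w2 ++ (W1 ++ ((c ++ d) ++ W2))),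
    ⟨a ++ b, ca * cb, _, _, M.glue ha hb, ⟨w2, d2, _, e1 * (cc * cd * e2), hw2, ?_, rfl, rfl⟩,
      rfl, ?_⟩,
    ?_⟩
  · rw [List.append_assoc, rel_append]
    exact ⟨_, _, _, _, hW1, ⟨c ++ d, cc * cd, W2, e2, M.glue hc hd, hR2, rfl, rfl⟩, rfl, rfl⟩
  · simp only [mul_left_comm, mul_comm]
  · rw [Subgroup.mem_bot] at hN hN2 ⊢
    simp only [mk_app, mul_assoc] at hN hN2 ⊢
    have : ∀ x, FreeGroup.mk b * (FreeGroup.mk w2 * (FreeGroup.mk W1 * (FreeGroup.mk c * x)))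
        = x := fun x => by
      have := congrArg (· * x) hN
      simpa only [mul_assoc, one_mul] using this
    rw [this, hN2]

/-- Converse of the second case of `sol_cut` in the free group. -/
theorem sol_glue' (P1 P2 Pn : V × V) (mid : List (V × V)) (r1 r2 rn : V) (c1 c2 c3 : A)
    (h1 : c1 ∈ M.Sol ⊥ [(r1, P1.2), (P2.1, r2)]) (h2 : c2 ∈ M.Sol ⊥ [(P1.1, r1), (rn, Pn.2)])
    (h3 : c3 ∈ M.Sol ⊥ ((r2, P2.2) :: (mid ++ [(Pn.1, rn)]))) :
    c1 * (c2 * c3) ∈ M.Sol ⊥ (P1 :: P2 :: (mid ++ [Pn])) := by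
  obtain ⟨_, ⟨b, cb, c, cc, hb, hc, rfl, rfl⟩, hN⟩ := h1
  obtain ⟨_, ⟨a, ca, f, cf, ha, hf, rfl, rfl⟩, hN2⟩ := h2
  obtain ⟨_, ⟨d, cd, _, _, hd, hR, rfl, rfl⟩, hN3⟩ := h3
  obtain ⟨W, cW, e, ce, hW, he, rfl, rfl⟩ := (M.rel_append _ _ _ _).1 hR
  rw [rel_single] at hc hf he
  refine ⟨(a ++ b) ++ ((c ++ d) ++ (W ++ (e ++ f))), ⟨a ++ b, ca * cb, _, _, M.glue ha hb,
    ⟨c ++ d, cc * cd, _, _, M.glue hc hd, (M.rel_append _ _ _ _).2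
      ⟨W, cW, e ++ f, ce * cf, hW, (M.rel_single _ _ _).2 (M.glue he hf), rfl, rfl⟩, rfl, rfl⟩,
    rfl, ?_⟩, ?_⟩
  · simp only [mul_left_comm, mul_comm]
  · rw [Subgroup.mem_bot] at hN hN2 hN3 ⊢
    simp only [mk_app, mul_assoc] at hN hN2 hN3 ⊢
    have k1 : ∀ x, FreeGroup.mk b * (FreeGroup.mk c * x) = x := fun x => by
      rw [← mul_assoc, hN, one_mul]
    have k3 : ∀ x, FreeGroup.mk d * (FreeGroup.mk W * (FreeGroup.mk e * x)) = x := fun x => by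
      have := congrArg (· * x) hN3
      simpa only [mul_assoc, one_mul] using this
    rw [k1, k3, hN2]

/-- States joined by a path reading the empty word represent the same vertex. -/
def setoid : Setoid V where
  r p q := ∃ c, M.T p [] c q
  iseqv := ⟨fun p => ⟨1, M.refl p⟩, fun ⟨c, h⟩ => ⟨c⁻¹, M.inv h⟩,
    fun ⟨c, h⟩ ⟨d, h'⟩ => ⟨c * d, M.glue h h'⟩⟩

/-- The states up to paths reading the empty word. -/
abbrev Vert : Type := Quotient M.setoid

/-- The vertex represented by a state. -/
def vert (p : V) : M.Vert := Quotient.mk M.setoid p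

theorem vert_eq {p q : V} : M.vert p = M.vert q ↔ ∃ c, M.T p [] c q := Quotient.eq (r := M.setoid)

/-- A partial injection of a finite set extends to a permutation. -/
theorem exists_perm {X : Type} [Finite X] (E : X → X → Prop)
    (hf : ∀ x y z, E x y → E x z → y = z) (hi : ∀ x y z, E x z → E y z → x = y) :
    ∃ σ : Equiv.Perm X, ∀ x y, E x y → σ x = y := by
  classical
  have := Fintype.ofFinite X
  let f : X → X := fun x => if h : ∃ y, E x y then h.choose else x
  have hfE : ∀ x, (∃ y, E x y) → E x (f x) := fun x h => by
    simp only [f, h, dif_pos]; exact h.choose_spec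
  obtain ⟨g, hg⟩ := Set.MapsTo.exists_equiv_extend_of_card_eq (t := (Finset.univ : Finset X))
    (by rw [Finset.card_univ]) (s := {x | ∃ y, E x y}) (f := f) (by intro x _; simp)
    (fun x hx y hy hxy => hi x y (f x) (hfE x hx) (hxy ▸ hfE y hy))
  refine ⟨g.trans (Equiv.subtypeUnivEquiv (by simp)), fun x y h => ?_⟩
  have := hg x ⟨y, h⟩
  simp only [Equiv.trans_apply, Equiv.subtypeUnivEquiv_apply, this]
  exact hf _ _ _ (hfE x ⟨y, h⟩) h

/-- The letters act on the finitely many vertices by partial bijections; these extend to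
permutations, so that the free group acts on the right compatibly with the paths. -/
theorem exists_action [Finite V] : ∃ ρ : FreeGroup α →* (Equiv.Perm M.Vert)ᵐᵒᵖ,
    ∀ p w c q, M.T p w c q → (ρ (FreeGroup.mk w)).unop (M.vert p) = M.vert q := by
  have step : ∀ a : α, ∃ σ : Equiv.Perm M.Vert, ∀ x y,
      (∃ p q c, M.vert p = x ∧ M.vert q = y ∧ M.T p [(a, true)] c q) → σ x = y := by
    intro a
    refine exists_perm _ ?_ ?_
    · rintro x y z ⟨p, q, c, rfl, rfl, h⟩ ⟨p', q', c', hp, rfl, h'⟩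
      obtain ⟨d, hd⟩ := M.vert_eq.1 hp.symm
      have := M.glue (M.glue (M.inv h) hd) h'
      exact M.vert_eq.2 ⟨_, M.triv this (by
        rw [mk_app, mk_app, ← FreeGroup.inv_mk, mk_nil', mul_one, inv_mul_cancel])⟩
    · rintro x y z ⟨p, q, c, rfl, rfl, h⟩ ⟨p', q', c', rfl, hq, h'⟩
      obtain ⟨d, hd⟩ := M.vert_eq.1 hq.symm
      have := M.glue (M.glue h hd) (M.inv h')
      exact M.vert_eq.2 ⟨_, M.triv this (by
        rw [mk_app, mk_app, ← FreeGroup.inv_mk, mk_nil', mul_one, mul_inv_cancel])⟩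
  choose σ hσ using step
  refine ⟨FreeGroup.lift fun a => MulOpposite.op (σ a), fun p w c q h => ?_⟩
  induction w generalizing p c with
  | nil => simpa [mk_nil'] using M.vert_eq.2 ⟨c, h⟩
  | cons l w ih =>
    obtain ⟨r, c1, c2, h1, h2, -⟩ := M.split (u := [l]) (v := w) h
    rw [mk_cons' l w, map_mul, MulOpposite.unop_mul, Equiv.Perm.mul_apply, ← ih r c2 h2]
    congr 1
    obtain ⟨a, b⟩ := l
    cases b
    · rw [mk_false, map_inv, FreeGroup.lift_apply_of, MulOpposite.unop_inv, Equiv.Perm.inv_eq_iff_eq]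
      exact (hσ a _ _ ⟨r, p, _, rfl, rfl, M.inv h1⟩).symm
    · rw [mk_true, FreeGroup.lift_apply_of]
      exact hσ a _ _ ⟨p, r, _, rfl, rfl, h1⟩

/-! ### Detecting closed polygons in a finite quotient -/

section Bigon

variable {N : Subgroup (FreeGroup α)} [N.Normal] {ρ : FreeGroup α →* (Equiv.Perm M.Vert)ᵐᵒᵖ}

theorem act_mul (x y : FreeGroup α) (v : M.Vert) :
    (ρ (x * y)).unop v = (ρ y).unop ((ρ x).unop v) := by
  rw [map_mul, MulOpposite.unop_mul, Equiv.Perm.mul_apply]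

theorem act_congr (hN : N ≤ ρ.ker) {x y : FreeGroup α}
    (h : QuotientGroup.mk' N x = QuotientGroup.mk' N y) : ρ x = ρ y := by
  have h1 : x⁻¹ * y ∈ N := QuotientGroup.eq.1 h
  have h2 := MonoidHom.mem_ker.1 (hN h1)
  rwa [map_mul, map_inv, inv_mul_eq_one] at h2

/-- An edge of the Cayley graph traversed by a path of the system comes from a path of the system
reading a single letter. -/
theorem traversed (hρ : ∀ p w c q, M.T p w c q → (ρ (FreeGroup.mk w)).unop (M.vert p) = M.vert q)
    (x0 : FreeGroup α) (v0 : M.Vert) (p q : V) (w : List (α × Bool)) (c : A) (h : M.T p w c q)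
    (hp : (ρ x0).unop v0 = M.vert p) (e : (FreeGroup α ⧸ N) × α)
    (he : cnt (QuotientGroup.mk' N) (QuotientGroup.mk' N x0) w e ≠ 0) :
    ∃ s s' d x, M.T s [(e.2, true)] d s' ∧ QuotientGroup.mk' N x = e.1 ∧
      (ρ x).unop v0 = M.vert s := by
  obtain ⟨u, l, v, rfl, rfl⟩ := cnt_ne_zero _ _ _ _ he
  obtain ⟨r, c1, c2, h1, h2, -⟩ := M.split h
  obtain ⟨r', d1, d2, h3, h4, -⟩ := M.split (u := [l]) (v := v) h2
  have e1 : (ρ (x0 * FreeGroup.mk u)).unop v0 = M.vert r := by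
    rw [act_mul, hp, hρ _ _ _ _ h1]
  obtain ⟨a, b⟩ := l
  cases b
  · refine ⟨r', r, _, x0 * FreeGroup.mk u * FreeGroup.mk [(a, false)], M.inv h3, ?_, ?_⟩
    · simp [edgeOf]
    · rw [act_mul, e1, hρ _ _ _ _ h3]
  · exact ⟨r, r', _, x0 * FreeGroup.mk u, h3, by simp [edgeOf], e1⟩

/-- Bigons that close up modulo the subgroup of words with even edge counts: the vertices reached
by words readable along both sides form a set with no boundary edge traversed oddly by the first
side, so the end of that side is one of them. -/
theorem bigon (hρ : ∀ p w c q, M.T p w c q → (ρ (FreeGroup.mk w)).unop (M.vert p) = M.vert q)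
    (hN : N ≤ ρ.ker) (p1 p2 : V × V)
    (h : (M.Sol (extHom (QuotientGroup.mk' N)).ker [p1, p2]).Nonempty) :
    (M.Sol ⊥ [p1, p2]).Nonempty := by
  obtain ⟨c, _, ⟨w1, c1, w2, c2, h1, h2, rfl, rfl⟩, hW⟩ := h
  rw [rel_single] at h2
  obtain ⟨ht, hc⟩ := ker_extHom _ _ hW 1
  -- `C`: vertices reached from the base point by a word readable along both sides.
  let C : Set (FreeGroup α ⧸ N) := {v | ∃ x u s t c c', QuotientGroup.mk' N x = v ∧
    M.T p1.1 u c s ∧ M.T p2.2 u c' t ∧ (ρ x).unop (M.vert p1.1) = M.vert s ∧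
    (ρ x).unop (M.vert p2.2) = M.vert t}
  have hstart : (ρ (FreeGroup.mk w1)).unop (M.vert p2.2) = M.vert p2.1 := by
    have e1 : ρ (FreeGroup.mk w1 * FreeGroup.mk w2) = 1 := by
      rw [← mk_app, ← map_one ρ]
      exact act_congr M hN (by rw [ht, map_one])
    have e2 := hρ _ _ _ _ h2
    rw [map_mul, mul_eq_one_iff_eq_inv] at e1
    rw [e1, MulOpposite.unop_inv, Equiv.Perm.inv_eq_iff_eq, e2]
  have hend : QuotientGroup.mk' N (FreeGroup.mk w1) ∈ C := by
    by_contra hne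
    obtain ⟨e, he, heC⟩ := exists_crossing (QuotientGroup.mk' N) C 1 w1
      ⟨1, [], p1.1, p2.2, 1, 1, map_one _, M.refl _, M.refl _, by simp, by simp⟩
      (by rwa [one_mul])
    have he2 : cnt (QuotientGroup.mk' N) (QuotientGroup.mk' N (FreeGroup.mk w1)) w2 e ≠ 0 := by
      intro h0
      rw [cnt_append, one_mul] at hc
      have hce := DFunLike.congr_fun hc e
      rw [Finsupp.add_apply, h0, add_zero] at hce
      exact he hce
    obtain ⟨s, s', d, x, hs, hx, hxs⟩ := M.traversed hρ 1 (M.vert p1.1) p1.1 p1.2 w1 c1 h1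
      (by simp) e (by rwa [map_one])
    obtain ⟨t, t', d', x', ht, hx', hxt⟩ :=
      M.traversed hρ (FreeGroup.mk w1) (M.vert p2.2) p2.1 p2.2 w2 c2 h2 hstart e he2
    have hxx : ρ x' = ρ x := act_congr M hN (hx'.trans hx.symm)
    rw [hxx] at hxt
    have as := hρ _ _ _ _ hs
    have at' := hρ _ _ _ _ ht
    apply heC
    constructor
    · rintro ⟨y, u, s0, t0, k, k', hy, hu, hu', hys, hyt⟩
      rw [act_congr M hN (hy.trans hx.symm)] at hys hyt
      obtain ⟨_, j⟩ := M.vert_eq.1 (hys.symm.trans hxs)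
      obtain ⟨_, j'⟩ := M.vert_eq.1 (hyt.symm.trans hxt)
      refine ⟨x * FreeGroup.of e.2, (u ++ []) ++ [(e.2, true)], s', t', _, _,
        by rw [map_mul, hx], M.glue (M.glue hu j) hs, M.glue (M.glue hu' j') ht, ?_, ?_⟩
      · rw [act_mul, hxs, ← mk_true, as]
      · rw [act_mul, hxt, ← mk_true, at']
    · rintro ⟨y, u, s0, t0, k, k', hy, hu, hu', hys, hyt⟩
      have : ρ y = ρ (x * FreeGroup.of e.2) := act_congr M hN (by rw [hy, map_mul, hx])
      rw [this, act_mul, hxs, ← mk_true, as] at hys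
      rw [this, act_mul, hxt, ← mk_true, at'] at hyt
      obtain ⟨_, j⟩ := M.vert_eq.1 hys.symm
      obtain ⟨_, j'⟩ := M.vert_eq.1 hyt.symm
      exact ⟨x, (u ++ []) ++ FreeGroup.invRev [(e.2, true)], s, t, _, _, hx,
        M.glue (M.glue hu j) (M.inv hs), M.glue (M.glue hu' j') (M.inv ht), hxs, hxt⟩
  obtain ⟨x, u, s, t, k, k', hx, hu, hu', hs, ht'⟩ := hend
  rw [act_congr M hN hx] at hs ht'
  rw [hρ _ _ _ _ h1] at hs
  rw [hstart] at ht'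
  obtain ⟨_, j⟩ := M.vert_eq.1 hs.symm
  obtain ⟨_, j'⟩ := M.vert_eq.1 ht'.symm
  refine ⟨_, _, ⟨_, _, _, _, M.glue hu j, (M.rel_single _ _ _).2 (M.inv (M.glue hu' j')),
    rfl, rfl⟩, ?_⟩
  rw [Subgroup.mem_bot, mk_app, ← FreeGroup.inv_mk, mul_inv_cancel]

end Bigon

instance finite_extHom {G : Type} [Group G] [Finite G] [Finite α] :
    Finite (Equiv.Perm (G × (G × α →₀ ZMod 2)))ᵐᵒᵖ :=
  have : Finite (G × α →₀ ZMod 2) := Finite.of_equiv _ Finsupp.equivFunOnFinite.symm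
  Finite.of_equiv _ MulOpposite.opEquiv

/-- If a polygon of a finite path system closes up in a suitable finite quotient of the free
group, then some polygon of the same shape closes up in the free group. -/
theorem exists_closing [Finite V] [Finite α] (n : ℕ) :
    ∃ N : Subgroup (FreeGroup α), N.Normal ∧ N.FiniteIndex ∧
      ∀ P : List (V × V), P.length ≤ n → (M.Sol N P).Nonempty → (M.Sol ⊥ P).Nonempty := by
  obtain ⟨ρ, hρ⟩ := M.exists_action
  have : Finite (Equiv.Perm M.Vert)ᵐᵒᵖ := Finite.of_equiv _ MulOpposite.opEquiv
  suffices ∃ N : Subgroup (FreeGroup α), N.Normal ∧ N.FiniteIndex ∧ N ≤ ρ.ker ∧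
      ∀ P : List (V × V), P.length ≤ n + 1 → (M.Sol N P).Nonempty → (M.Sol ⊥ P).Nonempty by
    obtain ⟨N, h1, h2, -, h3⟩ := this
    exact ⟨N, h1, h2, fun P hP => h3 P (by omega)⟩
  have nil : (M.Sol ⊥ []).Nonempty := ⟨1, [], ⟨rfl, rfl⟩, by simp [mk_nil']⟩
  have one : ∀ N ≤ ρ.ker, ∀ p, (M.Sol N [p]).Nonempty → (M.Sol ⊥ [p]).Nonempty := by
    rintro N hN p ⟨c, W, hR, hW⟩
    rw [rel_single] at hR
    have := hρ _ _ _ _ hR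
    rw [MonoidHom.mem_ker.1 (hN hW)] at this
    obtain ⟨d, hd⟩ := M.vert_eq.1 this
    exact ⟨d, [], (M.rel_single _ _ _).2 hd, by simp [mk_nil']⟩
  induction n with
  | zero =>
    refine ⟨ρ.ker, inferInstance, inferInstance, le_rfl, fun P hP => ?_⟩
    match P, hP with
    | [], _ => exact fun _ => nil
    | [p], _ => exact one _ le_rfl p
    | p :: q :: P, hP => simp at hP
  | succ n ih =>
    obtain ⟨N, hn, hf, hle, hS⟩ := ih
    have hle' : (extHom (QuotientGroup.mk' N)).ker ≤ N := by
      intro x hx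
      obtain ⟨w, rfl⟩ := Quot.exists_rep x
      exact (QuotientGroup.eq_one_iff _).1 (ker_extHom (QuotientGroup.mk' N) w hx 1).1
    have : Finite (FreeGroup α ⧸ N) := Subgroup.finite_quotient_of_finiteIndex
    refine ⟨(extHom (QuotientGroup.mk' N)).ker, inferInstance, inferInstance, hle'.trans hle,
      fun P hP => ?_⟩
    match P, hP with
    | [], _ => exact fun _ => nil
    | [p], _ => exact one _ (hle'.trans hle) p
    | [p, q], _ => exact M.bigon hρ hle p q
    | P1 :: P2 :: p3 :: P, hP =>
      rintro ⟨c, hc⟩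
      obtain ⟨mid, Pn, hmid⟩ : ∃ mid Pn, p3 :: P = mid ++ [Pn] :=
        (List.eq_nil_or_concat' (p3 :: P)).resolve_left (by simp)
      rw [hmid] at hc hP ⊢
      simp only [List.length_cons, List.length_append, List.length_nil] at hP
      rcases M.sol_cut N P1 P2 Pn mid c hc with
        ⟨m1, Pj, m2, r, r', c1, c2, rfl, h1, h2, -⟩ | ⟨r1, r2, rn, c1, c2, c3, h1, h2, h3, -⟩
      · simp only [List.length_cons, List.length_append] at hP
        obtain ⟨d1, k1⟩ := hS _ (by simp; omega) ⟨c1, h1⟩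
        obtain ⟨d2, k2⟩ := hS _ (by simp; omega) ⟨c2, h2⟩
        exact ⟨_, M.sol_glue _ _ _ _ _ _ _ _ _ _ k1 k2⟩
      · obtain ⟨d1, k1⟩ := hS _ (by simp; omega) ⟨c1, h1⟩
        obtain ⟨d2, k2⟩ := hS _ (by simp; omega) ⟨c2, h2⟩
        obtain ⟨d3, k3⟩ := hS _ (by simp; omega) ⟨c3, h3⟩
        exact ⟨_, M.sol_glue' _ _ _ _ _ _ _ _ _ _ k1 k2 k3⟩

/-! ### Weights of polygons -/

/-- A finite union of cosets of subgroups of `A`, in the ternary description of cosets (the empty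
set included). -/
def IsCosetUnion (S : Set A) : Prop :=
  ∃ F : Set (Set A), F.Finite ∧ (∀ T ∈ F, ∀ x ∈ T, ∀ y ∈ T, ∀ z ∈ T, x * y⁻¹ * z ∈ T) ∧ S = ⋃₀ F

theorem isCosetUnion_single {S : Set A} (h : ∀ x ∈ S, ∀ y ∈ S, ∀ z ∈ S, x * y⁻¹ * z ∈ S) :
    IsCosetUnion S := ⟨{S}, Set.finite_singleton _, by simpa using h, by simp⟩

theorem isCosetUnion_iUnion {ι : Type} [Finite ι] {S : ι → Set A}
    (h : ∀ i, IsCosetUnion (S i)) : IsCosetUnion (⋃ i, S i) := by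
  choose F h1 h2 h3 using h
  refine ⟨⋃ i, F i, Set.finite_iUnion h1, ?_, ?_⟩
  · intro T hT
    obtain ⟨i, hi⟩ := Set.mem_iUnion.1 hT
    exact h2 i T hi
  · rw [Set.sUnion_iUnion]; exact Set.iUnion_congr h3

theorem isCosetUnion_union {S S' : Set A} (h : IsCosetUnion S) (h' : IsCosetUnion S') :
    IsCosetUnion (S ∪ S') := by
  rw [Set.union_eq_iUnion]
  exact isCosetUnion_iUnion (by rintro (_ | _) <;> assumption)

open Pointwise in
theorem isCosetUnion_mul {S S' : Set A} (h : IsCosetUnion S) (h' : IsCosetUnion S') :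
    IsCosetUnion (S * S') := by
  obtain ⟨F, h1, h2, rfl⟩ := h
  obtain ⟨F', h1', h2', rfl⟩ := h'
  refine ⟨Set.image2 (fun x y => x * y) F F', h1.image2 _ h1', ?_, ?_⟩
  · rintro _ ⟨T, hT, T', hT', rfl⟩ _ ⟨x, hx, x', hx', rfl⟩ _ ⟨y, hy, y', hy', rfl⟩
      _ ⟨z, hz, z', hz', rfl⟩
    refine ⟨_, h2 T hT x hx y hy z hz, _, h2' T' hT' x' hx' y' hy' z' hz', ?_⟩
    simp only [mul_inv]
    simp only [mul_assoc, mul_left_comm, mul_comm]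
  · ext c
    simp only [Set.mem_mul, Set.mem_sUnion, Set.mem_image2]
    constructor
    · rintro ⟨x, ⟨T, hT, hx⟩, y, ⟨T', hT', hy⟩, rfl⟩
      exact ⟨_, ⟨T, hT, T', hT', rfl⟩, Set.mul_mem_mul hx hy⟩
    · rintro ⟨_, ⟨T, hT, T', hT', rfl⟩, x, hx, y, hy, rfl⟩
      exact ⟨x, ⟨T, hT, hx⟩, y, ⟨T', hT', hy⟩, rfl⟩

open Pointwise in
/-- The total weights of the polygons of a given shape that close up in the free group form a
finite union of cosets: such polygons are cut into bigons and monogons, in finitely many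
combinatorial ways. -/
theorem isCosetUnion_sol [Finite V] (n : ℕ) (P : List (V × V)) (hP : P.length ≤ n + 1) :
    IsCosetUnion (M.Sol ⊥ P) := by
  have one : ∀ p, IsCosetUnion (M.Sol ⊥ [p]) := by
    intro p
    apply isCosetUnion_single
    rintro x ⟨wx, hx, ex⟩ y ⟨wy, hy, ey⟩ z ⟨wz, hz, ez⟩
    rw [rel_single] at hx hy hz
    refine ⟨_, (M.rel_single _ _ _).2 (M.glue (M.glue hx (M.inv hy)) hz), ?_⟩
    rw [mk_app, mk_app, ← FreeGroup.inv_mk]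
    exact mul_mem (mul_mem ex (inv_mem ey)) ez
  have two : ∀ p q, IsCosetUnion (M.Sol ⊥ [p, q]) := by
    intro p q
    apply isCosetUnion_single
    rintro _ ⟨_, ⟨wx, cx, wx', cx', hx, hx', rfl, rfl⟩, ex⟩
      _ ⟨_, ⟨wy, cy, wy', cy', hy, hy', rfl, rfl⟩, ey⟩
      _ ⟨_, ⟨wz, cz, wz', cz', hz, hz', rfl, rfl⟩, ez⟩
    rw [rel_single] at hx' hy' hz'
    refine ⟨_, ⟨_, _, _, _, M.glue (M.glue hx (M.inv hy)) hz,
      (M.rel_single _ _ _).2 (M.glue (M.glue hz' (M.inv hy')) hx'), rfl, ?_⟩, ?_⟩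
    · simp only [mul_inv]
      simp only [mul_assoc, mul_left_comm, mul_comm]
    · rw [Subgroup.mem_bot] at ex ey ez ⊢
      simp only [mk_app, ← FreeGroup.inv_mk] at ex ey ez ⊢
      rw [mul_eq_one_iff_eq_inv] at ex ey ez
      rw [ex, ey, ez]
      group
  have nil : IsCosetUnion (M.Sol ⊥ []) := by
    apply isCosetUnion_single
    rintro x ⟨wx, ⟨rfl, rfl⟩, ex⟩ y ⟨wy, ⟨rfl, rfl⟩, ey⟩ z ⟨wz, ⟨rfl, rfl⟩, ez⟩
    exact ⟨[], ⟨rfl, by simp⟩, ex⟩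
  induction n generalizing P with
  | zero =>
    match P, hP with
    | [], _ => exact nil
    | [p], _ => exact one p
    | p :: q :: P, hP => simp at hP
  | succ n ih =>
    match P, hP with
    | [], _ => exact nil
    | [p], _ => exact one p
    | [p, q], _ => exact two p q
    | P1 :: P2 :: p3 :: P, hP =>
      obtain ⟨mid, Pn, hmid⟩ : ∃ mid Pn, p3 :: P = mid ++ [Pn] :=
        (List.eq_nil_or_concat' (p3 :: P)).resolve_left (by simp)
      rw [hmid] at hP ⊢
      simp only [List.length_cons, List.length_append, List.length_nil] at hP
      have key : M.Sol ⊥ (P1 :: P2 :: (mid ++ [Pn])) =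
          (⋃ x : Fin mid.length × V × V,
            M.Sol ⊥ ((x.2.1, P1.2) :: P2 :: (mid.take x.1 ++ [((mid[x.1]).1, x.2.2)])) *
            M.Sol ⊥ ((P1.1, x.2.1) :: (x.2.2, (mid[x.1]).2) :: (mid.drop (x.1 + 1) ++ [Pn]))) ∪
          (⋃ x : V × V × V, M.Sol ⊥ [(x.1, P1.2), (P2.1, x.2.1)] *
            (M.Sol ⊥ [(P1.1, x.1), (x.2.2, Pn.2)] *
              M.Sol ⊥ ((x.2.1, P2.2) :: (mid ++ [(Pn.1, x.2.2)])))) := by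
        ext c
        constructor
        · intro hc
          have hc' : c ∈ M.Sol (extHom (QuotientGroup.mk' ⊥)).ker
            (P1 :: P2 :: (mid ++ [Pn])) := M.sol_mono bot_le _ hc
          rcases M.sol_cut ⊥ P1 P2 Pn mid c hc' with
            ⟨m1, Pj, m2, r, r', c1, c2, rfl, h1, h2, rfl⟩ |
              ⟨r1, r2, rn, c1, c2, c3, h1, h2, h3, rfl⟩
          · refine Or.inl (Set.mem_iUnion.2 ⟨⟨⟨m1.length, by simp⟩, r, r'⟩, ?_⟩)
            exact Set.mul_mem_mul (by simpa using h1) (by simpa using h2)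
          · exact Or.inr (Set.mem_iUnion.2 ⟨⟨r1, r2, rn⟩,
              Set.mul_mem_mul h1 (Set.mul_mem_mul h2 h3)⟩)
        · rintro (hc | hc)
          · obtain ⟨⟨i, r, r'⟩, c1, h1, c2, h2, rfl⟩ := Set.mem_iUnion.1 hc
            have := M.sol_glue P1 P2 Pn _ _ _ _ _ _ _ h1 h2
            simpa using this
          · obtain ⟨⟨r1, r2, rn⟩, c1, h1, _, ⟨c2, h2, c3, h3, rfl⟩, rfl⟩ := Set.mem_iUnion.1 hc
            exact M.sol_glue' _ _ _ _ _ _ _ _ _ _ h1 h2 h3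
      rw [key]
      refine isCosetUnion_union (isCosetUnion_iUnion ?_) (isCosetUnion_iUnion ?_)
      · rintro ⟨i, r, r'⟩
        refine isCosetUnion_mul (ih _ ?_) (ih _ ?_)
        · have := i.2
          simp; omega
        · have := i.2
          simp; omega
      · rintro ⟨r1, r2, rn⟩
        exact isCosetUnion_mul (two _ _) (isCosetUnion_mul (two _ _) (ih _ (by simp; omega)))

end PathSystem

end PathSystems

/-! ### Products of subgroups in the profinite topology -/

section Profinite

open Pointwise

variable {G G' : Type} [Group G] [Group G']

/-- `P` is closed in the profinite topology, expressed through normal subgroups of finite index: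
each point outside `P` has a coset of such a subgroup disjoint from `P`. -/
def Separated (P : Set G) : Prop :=
  ∀ x ∉ P, ∃ N : Subgroup G, N.Normal ∧ N.FiniteIndex ∧ ∀ n ∈ N, x * n ∉ P

theorem isClosed_iff_separated (P : Set G) :
    @IsClosed G (profiniteTopology G) P ↔ Separated P := by
  let _ := profiniteTopology G
  rw [← isOpen_compl_iff]
  constructor
  · intro h
    suffices ∀ U : Set G, IsOpen U → ∀ x ∈ U, ∃ N : Subgroup G, N.Normal ∧ N.FiniteIndex ∧
        ∀ n ∈ N, x * n ∈ U from fun x hx => this _ h x hx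
    intro U hU
    induction hU with
    | basic S hS =>
      obtain ⟨H, g, hH, rfl⟩ := hS
      rintro _ ⟨y, hy, rfl⟩
      exact ⟨H.normalCore, inferInstance, inferInstance, fun n hn =>
        ⟨y * n, mul_mem hy (H.normalCore_le hn), (mul_assoc _ _ _).symm⟩⟩
    | univ => exact fun x _ => ⟨⊤, inferInstance, inferInstance, fun _ _ => trivial⟩
    | inter S T _ _ ihS ihT =>
      rintro x ⟨hS, hT⟩
      obtain ⟨N, h1, h2, h3⟩ := ihS x hS
      obtain ⟨N', h1', h2', h3'⟩ := ihT x hT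
      exact ⟨N ⊓ N', inferInstance, inferInstance, fun n hn => ⟨h3 n hn.1, h3' n hn.2⟩⟩
    | sUnion S _ ih =>
      rintro x ⟨T, hT, hx⟩
      obtain ⟨N, h1, h2, h3⟩ := ih T hT x hx
      exact ⟨N, h1, h2, fun n hn => ⟨T, hT, h3 n hn⟩⟩
  · intro h
    choose! N h1 h2 h3 using h
    have : Pᶜ = ⋃ x ∈ Pᶜ, (x * ·) '' (N x : Set G) := by
      ext y
      simp only [Set.mem_iUnion]
      constructor
      · intro hy
        exact ⟨y, hy, 1, one_mem _, mul_one y⟩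
      · rintro ⟨x, hx, n, hn, rfl⟩
        exact h3 x hx n hn
    rw [this]
    exact isOpen_biUnion fun x hx => TopologicalSpace.isOpen_generateFrom_of_mem
      ⟨N x, x, h2 x hx, rfl⟩

/-- The product of a list of subgroups, as a set. -/
def prodSet (L : List (Subgroup G)) : Set G := (L.map fun H : Subgroup G => (H : Set G)).prod

theorem fg_map (f : G →* G') {H : Subgroup G} (h : H.FG) : (H.map f).FG := by
  obtain ⟨S, rfl⟩ := h
  classical
  exact ⟨S.image f, by rw [Finset.coe_image, MonoidHom.map_closure]⟩

theorem prodSet_nil : prodSet ([] : List (Subgroup G)) = {1} := rfl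

theorem mem_prodSet_cons (H : Subgroup G) (L : List (Subgroup G)) (x : G) :
    x ∈ prodSet (H :: L) ↔ ∃ h ∈ H, ∃ y ∈ prodSet L, h * y = x := by
  simp [prodSet, Set.mem_mul]

/-- Product separability, in terms of lists of subgroups. -/
def ListSep (G : Type) [Group G] : Prop :=
  ∀ L : List (Subgroup G), (∀ H ∈ L, H.FG) → Separated (prodSet L)

theorem prodSet_ofFn {n : ℕ} (H : Fin n → Subgroup G) :
    prodSet (List.ofFn H) = {x : G | ∃ f : Fin n → G, (∀ i, f i ∈ H i) ∧
      x = (List.ofFn f).prod} := by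
  ext x
  rw [prodSet, List.map_ofFn, Set.mem_prod_list_ofFn]
  constructor
  · rintro ⟨f, rfl⟩
    exact ⟨fun i => f i, fun i => (f i).2, rfl⟩
  · rintro ⟨f, hf, rfl⟩
    exact ⟨fun i => ⟨f i, hf i⟩, rfl⟩

theorem productSeparable_iff : ProductSeparable G ↔ ListSep G := by
  constructor
  · intro h L hL
    rw [← isClosed_iff_separated, ← List.ofFn_get L, prodSet_ofFn]
    exact h _ _ fun i => hL _ (List.get_mem _ _)
  · intro h n H hH
    rw [isClosed_iff_separated, ← prodSet_ofFn]
    exact h _ fun K hK => by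
      obtain ⟨i, rfl⟩ := (List.mem_ofFn' _ _).1 hK
      exact hH i

theorem prodSet_map (f : G →* G') (L : List (Subgroup G)) :
    prodSet (L.map (Subgroup.map f)) = f '' prodSet L := by
  induction L with
  | nil => simp [prodSet_nil]
  | cons H L ih =>
    ext x
    rw [List.map_cons, mem_prodSet_cons, ih]
    constructor
    · rintro ⟨_, ⟨h, hh, rfl⟩, _, ⟨y, hy, rfl⟩, rfl⟩
      exact ⟨h * y, (mem_prodSet_cons _ _ _).2 ⟨h, hh, y, hy, rfl⟩, map_mul _ _ _⟩
    · rintro ⟨_, hz, rfl⟩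
      obtain ⟨h, hh, y, hy, rfl⟩ := (mem_prodSet_cons _ _ _).1 hz
      exact ⟨f h, ⟨h, hh, rfl⟩, f y, ⟨y, hy, rfl⟩, (map_mul _ _ _).symm⟩

/-- Homomorphisms are continuous for the profinite topologies. -/
theorem separated_comap (f : G →* G') {P : Set G'} (h : Separated P) : Separated (f ⁻¹' P) := by
  intro x hx
  obtain ⟨N, h1, h2, h3⟩ := h (f x) hx
  refine ⟨N.comap f, inferInstance, ⟨by
    simpa using Subgroup.relIndex_comap_ne_zero f (J := N) (K := ⊤)
      (by simpa using h2.index_ne_zero)⟩,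
    fun n hn hc => h3 (f n) hn ?_⟩
  rwa [← map_mul]

/-- Product separability passes to subgroups. -/
theorem ListSep.of_injective (f : G →* G') (hf : Function.Injective f) (h : ListSep G') :
    ListSep G := by
  intro L hL
  have := separated_comap f (h (L.map (Subgroup.map f)) (by
    intro K hK
    obtain ⟨H, hH, rfl⟩ := List.mem_map.1 hK
    exact fg_map f (hL H hH)))
  rwa [prodSet_map, hf.preimage_image] at this

theorem separated_empty : Separated (∅ : Set G) :=
  fun _ _ => ⟨⊤, inferInstance, inferInstance, fun _ _ h => h⟩

theorem Separated.union {P Q : Set G} (hP : Separated P) (hQ : Separated Q) :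
    Separated (P ∪ Q) := by
  rintro x hx
  rw [Set.mem_union, not_or] at hx
  obtain ⟨N, h1, h2, h3⟩ := hP x hx.1
  obtain ⟨N', h1', h2', h3'⟩ := hQ x hx.2
  exact ⟨N ⊓ N', inferInstance, inferInstance, fun n hn hc =>
    hc.elim (h3 n hn.1) (h3' n hn.2)⟩

theorem Separated.sUnion {F : Set (Set G)} (hF : F.Finite) (h : ∀ P ∈ F, Separated P) :
    Separated (⋃₀ F) := by
  induction F, hF using Set.Finite.induction_on with
  | empty => simpa using separated_empty
  | @insert a s _ _ ih =>
    rw [Set.sUnion_insert]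
    exact (h _ (Set.mem_insert _ _)).union (ih fun P hP => h _ (Set.mem_insert_of_mem _ hP))

/-- Right translates of separated sets are separated. -/
theorem Separated.translate {P : Set G} (h : Separated P) (g : G) :
    Separated ((· * g) '' P) := by
  intro x hx
  obtain ⟨N, h1, h2, h3⟩ := h (x * g⁻¹) (fun hc => hx ⟨_, hc, by simp⟩)
  refine ⟨N, h1, h2, ?_⟩
  rintro n hn ⟨p, hp, hpx⟩
  have : x * g⁻¹ * (g * n * g⁻¹) = p := by
    rw [eq_mul_inv_of_mul_eq hpx]; group
  exact h3 (g * n * g⁻¹) (h1.conj_mem n hn g) (this ▸ hp)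

/-- A separated subset of a normal subgroup of finite index is separated in the whole group. -/
theorem separated_image {K : Subgroup G} [K.Normal] [K.FiniteIndex] {P : Set K}
    (h : Separated P) : Separated (K.subtype '' P) := by
  intro x hx
  by_cases hxK : x ∈ K
  · obtain ⟨N, h1, h2, h3⟩ := h ⟨x, hxK⟩ (fun hc => hx ⟨_, hc, rfl⟩)
    have hfi : (N.map K.subtype).FiniteIndex := by
      refine ⟨?_⟩
      rw [Subgroup.index_map_subtype]
      exact mul_ne_zero h2.index_ne_zero ‹K.FiniteIndex›.index_ne_zero
    refine ⟨(N.map K.subtype).normalCore, inferInstance, inferInstance, ?_⟩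
    rintro n hn ⟨p, hp, hpx⟩
    obtain ⟨n', hn', rfl⟩ := Subgroup.normalCore_le _ hn
    refine h3 n' hn' ?_
    have : (⟨x, hxK⟩ : K) * n' = p := Subtype.ext hpx.symm
    exact this ▸ hp
  · refine ⟨K, inferInstance, inferInstance, ?_⟩
    rintro n hn ⟨p, hp, hpx⟩
    exact hxK ((mul_mem_cancel_right hn).1 (hpx ▸ p.2))

theorem prodSet_conj (g : G) (L : List (Subgroup G)) (x : G) :
    x ∈ prodSet (L.map (Subgroup.map (MulAut.conj g).toMonoidHom)) ↔ g⁻¹ * x * g ∈ prodSet L := by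
  rw [prodSet_map]
  constructor
  · rintro ⟨y, hy, rfl⟩
    simpa [mul_assoc] using hy
  · intro h
    exact ⟨_, h, by simp [mul_assoc]⟩

/-- Product separability passes to overgroups of finite index. With `N` a normal subgroup of
finite index contained in the given subgroup, every product of finitely generated subgroups is a
finite union of right translates of products of finitely generated subgroups of `N`. -/
theorem ListSep.of_finiteIndex (K : Subgroup G) [K.FiniteIndex] (h : ListSep K) : ListSep G := by
  let N := K.normalCore
  have hN : ListSep N := h.of_injective (Subgroup.inclusion K.normalCore_le)
    (Subgroup.inclusion_injective _)
  suffices ∀ L : List (Subgroup G), (∀ H ∈ L, H.FG) → ∃ F : Set (Set G), F.Finite ∧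
      (∀ P ∈ F, ∃ (L' : List (Subgroup G)) (g : G), (∀ H ∈ L', H.FG ∧ H ≤ N) ∧
        P = (· * g) '' prodSet L') ∧ prodSet L = ⋃₀ F by
    intro L hL
    obtain ⟨F, hF, hP, hU⟩ := this L hL
    rw [hU]
    refine Separated.sUnion hF fun P hPF => ?_
    obtain ⟨L', g, hL', rfl⟩ := hP P hPF
    refine Separated.translate ?_ g
    have e : L' = (L'.map fun H : Subgroup G => H.subgroupOf N).map (Subgroup.map N.subtype) := by
      rw [List.map_map]
      conv_lhs => rw [← List.map_id L']
      refine List.map_congr_left fun H hH => ?_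
      rw [Function.comp_apply, Subgroup.subgroupOf_map_subtype, inf_eq_left.2 (hL' H hH).2, id]
    rw [e, prodSet_map]
    refine separated_image (hN _ fun H hH => ?_)
    obtain ⟨H', hH', rfl⟩ := List.mem_map.1 hH
    have := (Group.fg_iff_subgroup_fg H').2 (hL' H' hH').1
    exact (Group.fg_iff_subgroup_fg _).1
      (Group.fg_of_surjective
        (f := (Subgroup.subgroupOfEquivOfLe (hL' H' hH').2).symm.toMonoidHom)
        (Subgroup.subgroupOfEquivOfLe (hL' H' hH').2).symm.surjective)
  intro L hL
  induction L with
  | nil => exact ⟨{{1}}, Set.finite_singleton _, by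
      rintro _ rfl
      exact ⟨[], 1, by simp, by simp [prodSet_nil]⟩, by simp [prodSet_nil]⟩
  | cons H L ih =>
    obtain ⟨F, hF, hP, hU⟩ := ih fun H' hH' => hL H' (List.mem_cons_of_mem _ hH')
    have hfg := (Group.fg_iff_subgroup_fg H).2 (hL H List.mem_cons_self)
    have : Finite (H ⧸ N.subgroupOf H) := Subgroup.finite_quotient_of_finiteIndex
    let r : H ⧸ N.subgroupOf H → G := fun q => (q.out : H)
    refine ⟨Set.range (fun x : (H ⧸ N.subgroupOf H) × F =>
      ((N ⊓ H : Subgroup G) : Set G) * ({r x.1} * x.2.1)), ?_, ?_, ?_⟩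
    · have := hF.to_subtype
      exact Set.finite_range _
    · rintro _ ⟨⟨q, P, hPF⟩, rfl⟩
      obtain ⟨L', g, hL', rfl⟩ := hP P hPF
      refine ⟨(N ⊓ H) :: L'.map (Subgroup.map (MulAut.conj (r q)).toMonoidHom), r q * g, ?_, ?_⟩
      · intro H' hH'
        rcases List.mem_cons.1 hH' with rfl | hH'
        · refine ⟨?_, inf_le_left⟩
          have : Group.FG (N.subgroupOf H) := inferInstance
          have := fg_map H.subtype ((Group.fg_iff_subgroup_fg _).1 this)
          rwa [Subgroup.subgroupOf_map_subtype] at this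
        · obtain ⟨H'', hH'', rfl⟩ := List.mem_map.1 hH'
          refine ⟨fg_map _ (hL' _ hH'').1, ?_⟩
          rintro _ ⟨x, hx, rfl⟩
          exact (inferInstance : N.Normal).conj_mem _ ((hL' _ hH'').2 hx) _
      · ext x
        simp only [Set.mem_mul, Set.mem_image, mem_prodSet_cons, prodSet_conj,
          Set.mem_singleton_iff]
        constructor
        · rintro ⟨a, ha, _, ⟨_, rfl, _, ⟨y, hy, rfl⟩, rfl⟩, rfl⟩
          exact ⟨a * (r q * y * (r q)⁻¹), ⟨a, ha, _, by simpa [mul_assoc] using hy, rfl⟩,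
            by group⟩
        · rintro ⟨_, ⟨a, ha, y, hy, rfl⟩, rfl⟩
          exact ⟨a, ha, _, ⟨_, rfl, _, ⟨_, hy, rfl⟩, rfl⟩, by group⟩
    · ext x
      simp only [mem_prodSet_cons, hU, Set.mem_sUnion, Set.mem_range]
      constructor
      · rintro ⟨h, hh, y, ⟨P, hPF, hy⟩, rfl⟩
        obtain ⟨⟨m, hm⟩, hm'⟩ := QuotientGroup.mk_out_eq_mul (N.subgroupOf H) ⟨h, hh⟩
        refine ⟨_, ⟨⟨QuotientGroup.mk ⟨h, hh⟩, P, hPF⟩, rfl⟩, h * (h * m)⁻¹, ?_, _,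
          ⟨_, rfl, y, hy, rfl⟩, ?_⟩
        · have hmN : (m : G) ∈ N := hm
          refine ⟨?_, H.mul_mem hh (H.inv_mem (H.mul_mem hh m.2))⟩
          have : h * (h * (m : G))⁻¹ = h * (m : G)⁻¹ * h⁻¹ := by group
          rw [this]
          exact (inferInstance : N.Normal).conj_mem _ (inv_mem hmN) _
        · have : r (QuotientGroup.mk ⟨h, hh⟩) = h * m := congrArg Subtype.val hm'
          simp only [this]
          group
      · rintro ⟨_, ⟨⟨q, P, hPF⟩, rfl⟩, a, ha, _, ⟨_, rfl, y, hy, rfl⟩, rfl⟩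
        exact ⟨a * r q, mul_mem ha.2 (q.out : H).2, y, ⟨P, hPF, hy⟩, mul_assoc _ _ _⟩

end Profinite

/-! ### Subgroups as path systems -/

section CosetSystem

variable {α A : Type} [CommGroup A]

/-- The path system of a set `W` of pairs `(H, r)`, which stand for the vertices `H (1, r)` of the
Schreier graphs of subgroups `H` of `A × FreeGroup α`, up to the first coordinate. A path must
stay among the vertices in `W`. -/
def cosetSystem (W : Set (Subgroup (A × FreeGroup α) × FreeGroup α)) : PathSystem α A W where
  T p w c q := p.1.1 = q.1.1 ∧ (c, p.1.2 * FreeGroup.mk w * q.1.2⁻¹) ∈ p.1.1 ∧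
    ∀ v t, w = v ++ t → ∃ s c', (p.1.1, s) ∈ W ∧ (c', p.1.2 * FreeGroup.mk v * s⁻¹) ∈ p.1.1
  refl := by
    rintro ⟨⟨H, r⟩, hp⟩
    have h1 : ((1 : A), r * FreeGroup.mk [] * r⁻¹) ∈ H := by
      rw [mk_nil', mul_one, mul_inv_cancel]; exact H.one_mem
    refine ⟨rfl, h1, fun v t h => ?_⟩
    obtain ⟨rfl, -⟩ := List.append_eq_nil_iff.1 h.symm
    exact ⟨r, 1, hp, h1⟩
  glue := by
    rintro ⟨⟨H, r⟩, hp⟩ u c ⟨⟨H', s⟩, hs⟩ v d ⟨⟨H'', q⟩, hq⟩ ⟨h, h1, h2⟩ ⟨h', h1', h2'⟩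
    dsimp only at *
    subst h h'
    refine ⟨rfl, ?_, fun x t hx => ?_⟩
    · convert H.mul_mem h1 h1' using 1
      rw [Prod.mk_mul_mk, mk_app]
      group
    · rcases List.append_eq_append_iff.1 hx with ⟨y, rfl, rfl⟩ | ⟨y, rfl, rfl⟩
      · obtain ⟨s', c', hW, hc'⟩ := h2' y t rfl
        refine ⟨s', c * c', hW, ?_⟩
        convert H.mul_mem h1 hc' using 1
        rw [Prod.mk_mul_mk, mk_app]
        group
      · exact h2 x y rfl
  split := by
    rintro ⟨⟨H, r⟩, hp⟩ u v c ⟨⟨H', q⟩, hq⟩ ⟨h, h1, h2⟩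
    dsimp only at *
    subst h
    obtain ⟨s, c', hW, hc'⟩ := h2 u v rfl
    refine ⟨⟨(H, s), hW⟩, c', c'⁻¹ * c, ⟨rfl, hc', fun x t hx => ?_⟩,
      ⟨rfl, ?_, fun x t hx => ?_⟩, by simp⟩
    · exact h2 x (t ++ v) (by rw [hx, List.append_assoc])
    · convert H.mul_mem (H.inv_mem hc') h1 using 1
      rw [Prod.inv_mk, Prod.mk_mul_mk, mk_app]
      group
    · obtain ⟨s', c'', hW', hc''⟩ := h2 (u ++ x) t (by rw [hx, List.append_assoc])
      refine ⟨s', c'⁻¹ * c'', hW', ?_⟩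
      convert H.mul_mem (H.inv_mem hc') hc'' using 1
      rw [Prod.inv_mk, Prod.mk_mul_mk, mk_app]
      group
  inv := by
    rintro ⟨⟨H, r⟩, hp⟩ w c ⟨⟨H', q⟩, hq⟩ ⟨h, h1, h2⟩
    dsimp only at *
    subst h
    refine ⟨rfl, ?_, fun v t hx => ?_⟩
    · convert H.inv_mem h1 using 1
      rw [Prod.inv_mk, ← FreeGroup.inv_mk]
      group
    · have hw : w = FreeGroup.invRev t ++ FreeGroup.invRev v := by
        rw [← FreeGroup.invRev_invRev (L₁ := w), hx]
        simp [FreeGroup.invRev]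
      obtain ⟨s, c', hW, hc'⟩ := h2 _ _ hw
      refine ⟨s, c⁻¹ * c', hW, ?_⟩
      convert H.mul_mem (H.inv_mem h1) hc' using 1
      rw [Prod.inv_mk, Prod.mk_mul_mk, hw, mk_app, ← FreeGroup.inv_mk, ← FreeGroup.inv_mk]
      group
  triv := by
    rintro ⟨⟨H, r⟩, hp⟩ w c ⟨⟨H', q⟩, hq⟩ ⟨h, h1, h2⟩ hw
    dsimp only at *
    subst h
    rw [hw, ← mk_nil'] at h1
    refine ⟨rfl, h1, fun v t hx => ?_⟩
    obtain ⟨rfl, -⟩ := List.append_eq_nil_iff.1 hx.symm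
    exact h2 [] w rfl

/-- The values of the initial segments of a word. -/
def prefixValues (w : List (α × Bool)) : Set (FreeGroup α) :=
  {x | ∃ v t, w = v ++ t ∧ x = FreeGroup.mk v}

theorem prefixValues_finite (w : List (α × Bool)) : (prefixValues w).Finite := by
  refine ((List.finite_toSet w.inits).image FreeGroup.mk).subset ?_
  rintro _ ⟨v, t, rfl, rfl⟩
  exact ⟨v, by simp, rfl⟩

/-- A finitely generated subgroup `H` is read off the loops at the base vertex of a finite part of
its Schreier graph. -/
theorem exists_base (H : Subgroup (A × FreeGroup α)) (hH : H.FG) :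
    ∃ B : Set (FreeGroup α), B.Finite ∧ 1 ∈ B ∧
      ∀ (W : Set (Subgroup (A × FreeGroup α) × FreeGroup α)) (_ : ∀ r ∈ B, (H, r) ∈ W)
        (h1 : (H, 1) ∈ W) (h : A × FreeGroup α), h ∈ H → ∃ w, FreeGroup.mk w = h.2 ∧
          (cosetSystem W).T ⟨(H, 1), h1⟩ w h.1 ⟨(H, 1), h1⟩ := by
  obtain ⟨S, rfl⟩ := hH
  have hex : ∀ x : FreeGroup α, ∃ w, FreeGroup.mk w = x := fun x => Quot.exists_rep x
  choose word hword using hex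
  refine ⟨{1} ∪ ⋃ s ∈ S, prefixValues (word s.2), ?_, Or.inl rfl, ?_⟩
  · exact (Set.finite_singleton _).union
      (S.finite_toSet.biUnion fun s _ => prefixValues_finite _)
  · intro W hW h1 h hh
    induction hh using Subgroup.closure_induction with
    | mem s hs =>
      refine ⟨word s.2, hword _, rfl, ?_, fun v t hv => ⟨FreeGroup.mk v, 1, hW _ ?_, ?_⟩⟩
      · change (s.1, 1 * FreeGroup.mk (word s.2) * 1⁻¹) ∈ _
        rw [hword, one_mul, inv_one, mul_one]
        exact Subgroup.subset_closure hs
      · exact Or.inr (Set.mem_biUnion hs ⟨v, t, hv, rfl⟩)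
      · change ((1 : A), 1 * FreeGroup.mk v * (FreeGroup.mk v)⁻¹) ∈ _
        rw [one_mul, mul_inv_cancel]
        exact Subgroup.one_mem _
    | one => exact ⟨[], rfl, (cosetSystem W).refl _⟩
    | mul x y _ _ hx hy =>
      obtain ⟨u, hu, hu'⟩ := hx
      obtain ⟨v, hv, hv'⟩ := hy
      exact ⟨u ++ v, by rw [mk_app, hu, hv, Prod.snd_mul], (cosetSystem W).glue hu' hv'⟩
    | inv x _ hx =>
      obtain ⟨u, hu, hu'⟩ := hx
      exact ⟨_, by rw [← FreeGroup.inv_mk, hu, Prod.snd_inv], (cosetSystem W).inv hu'⟩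

/-- Membership in a product of finitely generated subgroups of `A × FreeGroup α` is the closing
up of polygons whose last side reads a fixed element of the free group. -/
theorem exists_pathSystem (L : List (Subgroup (A × FreeGroup α))) (hL : ∀ H ∈ L, H.FG)
    (g : FreeGroup α) :
    ∃ (V : Type) (_ : Finite V) (M : PathSystem α A V) (P : List (V × V)),
      P.length = L.length + 1 ∧
        ∀ N c, c ∈ M.Sol N P ↔ ∃ x, (c, x) ∈ prodSet L ∧ x * g⁻¹ ∈ N := by
  choose! B hB1 hB2 hB3 using exists_base (α := α) (A := A)
  obtain ⟨wg, hwg⟩ : ∃ w, FreeGroup.mk w = g⁻¹ := Quot.exists_rep _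
  let W : Set (Subgroup (A × FreeGroup α) × FreeGroup α) :=
    (⋃ H ∈ {H | H ∈ L}, (fun r => (H, r)) '' B H) ∪ (fun r => (⊥, r)) '' prefixValues wg
  have hW : W.Finite := (L.finite_toSet.biUnion fun H hH => (hB1 H (hL H hH)).image _).union
    ((prefixValues_finite _).image _)
  have hWL : ∀ H ∈ L, ∀ r ∈ B H, (H, r) ∈ W := fun H hH r hr =>
    Or.inl (Set.mem_biUnion hH ⟨r, hr, rfl⟩)
  let M := cosetSystem W
  have b0 : ((⊥ : Subgroup (A × FreeGroup α)), (1 : FreeGroup α)) ∈ W :=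
    Or.inr ⟨1, ⟨[], wg, rfl, rfl⟩, rfl⟩
  have b1 : ((⊥ : Subgroup (A × FreeGroup α)), g⁻¹) ∈ W :=
    Or.inr ⟨g⁻¹, ⟨wg, [], by simp, hwg.symm⟩, rfl⟩
  have main : ∀ L' : List (Subgroup (A × FreeGroup α)), (∀ H ∈ L', H ∈ L) →
      ∃ P : List (W × W), P.length = L'.length ∧
        ∀ c x, (∃ w, M.Rel P w c ∧ FreeGroup.mk w = x) ↔ (c, x) ∈ prodSet L' := by
    intro L'
    induction L' with
    | nil =>
      refine fun _ => ⟨[], rfl, fun c x => ⟨?_, ?_⟩⟩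
      · rintro ⟨_, ⟨rfl, rfl⟩, rfl⟩
        rfl
      · intro h
        obtain ⟨rfl, rfl⟩ := Prod.mk.inj (h : (c, x) = (1, 1))
        exact ⟨[], ⟨rfl, rfl⟩, rfl⟩
    | cons H L' ih =>
      intro hL'
      obtain ⟨P, hP, hPR⟩ := ih fun K hK => hL' K (List.mem_cons_of_mem _ hK)
      have hH : H ∈ L := hL' H List.mem_cons_self
      have h1 := hWL H hH 1 (hB2 H (hL H hH))
      refine ⟨(⟨(H, 1), h1⟩, ⟨(H, 1), h1⟩) :: P, by simp [hP], fun c x => ?_⟩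
      rw [mem_prodSet_cons]
      constructor
      · rintro ⟨_, ⟨w, c1, w', c2, hT, hR, rfl, rfl⟩, rfl⟩
        refine ⟨(c1, FreeGroup.mk w), ?_, (c2, FreeGroup.mk w'), (hPR _ _).1 ⟨w', hR, rfl⟩, ?_⟩
        · simpa using hT.2.1
        · rw [Prod.mk_mul_mk, mk_app]
      · rintro ⟨h, hh, ⟨c2, x2⟩, hy, he⟩
        obtain ⟨w', hR, rfl⟩ := (hPR _ _).2 hy
        obtain ⟨w, hw, hT⟩ := hB3 H (hL H hH) W (hWL H hH) h1 h hh
        obtain ⟨rfl, rfl⟩ := Prod.mk.inj he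
        exact ⟨w ++ w', ⟨w, h.1, w', c2, hT, hR, rfl, rfl⟩, by rw [mk_app, hw]⟩
  obtain ⟨P, hP, hPR⟩ := main L fun _ h => h
  refine ⟨W, hW.to_subtype, M, P ++ [(⟨_, b0⟩, ⟨_, b1⟩)], by simp [hP], fun N c => ?_⟩
  constructor
  · rintro ⟨w, hR, hw⟩
    obtain ⟨w1, c1, w2, c2, hR1, hR2, rfl, rfl⟩ := (M.rel_append _ _ _ _).1 hR
    rw [M.rel_single] at hR2
    have h2 := hR2.2.1
    rw [Subgroup.mem_bot] at h2
    obtain ⟨rfl, h3⟩ := Prod.mk.inj (h2 : (c2, 1 * FreeGroup.mk w2 * g⁻¹⁻¹) = (1, 1))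
    rw [one_mul, inv_inv, mul_eq_one_iff_eq_inv] at h3
    refine ⟨FreeGroup.mk w1, by rw [mul_one]; exact (hPR _ _).1 ⟨w1, hR1, rfl⟩, ?_⟩
    rwa [← h3, ← mk_app]
  · rintro ⟨x, hx, hN⟩
    obtain ⟨w, hR, rfl⟩ := (hPR _ _).2 hx
    refine ⟨w ++ wg, (M.rel_append _ _ _ _).2 ⟨w, c, wg, 1, hR, (M.rel_single _ _ _).2 ?_, rfl,
      (mul_one c).symm⟩, by rwa [mk_app, hwg]⟩
    refine ⟨rfl, ?_, fun v t hv => ⟨FreeGroup.mk v, 1, Or.inr ⟨_, ⟨v, t, hv, rfl⟩, rfl⟩, ?_⟩⟩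
    · simp [hwg]
    · change ((1 : A), 1 * FreeGroup.mk v * (FreeGroup.mk v)⁻¹) ∈ _
      rw [one_mul, mul_inv_cancel]
      exact Subgroup.one_mem _

end CosetSystem

/-! ### The product of the integers and a free group -/

section ZTimesFree

open Pointwise

variable {α : Type} [Finite α]

/-- Products of finitely generated subgroups of a free group are closed (Ribes–Zalesskii). -/
theorem listSep_freeGroup : ListSep (FreeGroup α) := by
  intro L hL g hg
  let f : FreeGroup α →* Multiplicative ℤ × FreeGroup α := MonoidHom.inr _ _
  obtain ⟨V, _, M, P, hP, hS⟩ := exists_pathSystem (L.map (Subgroup.map f)) (by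
    intro K hK
    obtain ⟨H, hH, rfl⟩ := List.mem_map.1 hK
    exact fg_map f (hL H hH)) g
  obtain ⟨N, h1, h2, h3⟩ := M.exists_closing (L.length + 1)
  refine ⟨N, h1, h2, fun n hn hgn => hg ?_⟩
  obtain ⟨c, hc⟩ := h3 P (by simp [hP]) ⟨1, (hS N 1).2 ⟨g * n, by
    rw [prodSet_map]; exact ⟨_, hgn, rfl⟩, h1.conj_mem n hn g⟩⟩
  obtain ⟨x, hx, hxg⟩ := (hS _ _).1 hc
  rw [Subgroup.mem_bot, mul_inv_eq_one] at hxg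
  subst hxg
  rw [prodSet_map] at hx
  obtain ⟨y, hy, hy'⟩ := hx
  have : y = x := congrArg Prod.snd hy'
  exact this ▸ hy

/-- The kernel of the projection to the finite group `Z` has finite index and is free. -/
theorem listSep_finite_prod (Z : Type) [Group Z] [Finite Z] : ListSep (Z × FreeGroup α) := by
  let f : Z × FreeGroup α →* Z := MonoidHom.fst _ _
  refine ListSep.of_finiteIndex f.ker (ListSep.of_injective
    ((MonoidHom.snd Z (FreeGroup α)).comp f.ker.subtype) ?_ listSep_freeGroup)
  rintro ⟨⟨a, x⟩, ha⟩ ⟨⟨b, y⟩, hb⟩ h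
  have ha : a = 1 := ha
  have hb : b = 1 := hb
  have h : x = y := h
  subst ha hb h
  rfl

/-- A finite union of cosets in `ℤ` is closed. -/
theorem exists_modulus {S : Set (Multiplicative ℤ)} (hS : PathSystem.IsCosetUnion S)
    (a : Multiplicative ℤ) (ha : a ∉ S) :
    ∃ m : ℕ, m ≠ 0 ∧ ∀ k : Multiplicative ℤ, a * k ^ m ∉ S := by
  obtain ⟨F, hF, hc, rfl⟩ := hS
  induction F, hF using Set.Finite.induction_on with
  | empty => exact ⟨1, one_ne_zero, by simp⟩
  | @insert T F _ _ ih =>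
    rw [Set.sUnion_insert, Set.mem_union, not_or] at ha
    obtain ⟨m, hm, hmF⟩ := ih (fun T' hT' => hc T' (Set.mem_insert_of_mem _ hT')) ha.2
    obtain ⟨m', hm', hmT⟩ : ∃ m : ℕ, m ≠ 0 ∧ ∀ k : Multiplicative ℤ, a * k ^ m ∉ T := by
      by_cases hT : T.Subsingleton
      · by_cases hT0 : T.Nonempty
        · obtain ⟨t, ht⟩ := hT0
          have hta : t.toAdd - a.toAdd ≠ 0 := fun h => ha.1 (by
            have : t = a := Multiplicative.toAdd.injective (sub_eq_zero.1 h)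
            exact this ▸ ht)
          -- a modulus exceeding the distance from `a` to the only point `t`
          refine ⟨(t.toAdd - a.toAdd).natAbs + 1, by omega, fun k hk => ?_⟩
          have h1 : a * k ^ ((t.toAdd - a.toAdd).natAbs + 1) = t := hT hk ht
          have h2 : (((t.toAdd - a.toAdd).natAbs + 1 : ℕ) : ℤ) ∣ t.toAdd - a.toAdd :=
            ⟨k.toAdd, by
              conv_lhs => rw [← h1, toAdd_mul, toAdd_pow, nsmul_eq_mul, add_sub_cancel_left]⟩
          have h3 := Nat.le_of_dvd (by omega) (Int.natCast_dvd.1 h2)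
          omega
        · exact ⟨1, one_ne_zero, fun k hk => hT0 ⟨_, hk⟩⟩
      · rw [Set.not_subsingleton_iff] at hT
        obtain ⟨x, hx, y, hy, hxy⟩ := hT
        -- `T` is invariant under translation by `x - y`
        have hT := hc T (Set.mem_insert _ _)
        have inv1 : ∀ t ∈ T, t * (x * y⁻¹) ∈ T := fun t ht => by
          have := hT t ht y hy x hx
          rwa [mul_assoc, mul_comm y⁻¹] at this
        have inv2 : ∀ t ∈ T, t * (x * y⁻¹)⁻¹ ∈ T := fun t ht => by
          have := hT t ht x hx y hy
          rwa [mul_assoc, mul_comm x⁻¹, ← inv_inv y, ← mul_inv_rev] at this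
        have inv : ∀ (k : ℤ) (t), t ∈ T → t * (x * y⁻¹) ^ k ∈ T := by
          intro k
          induction k with
          | zero => intro t ht; simpa using ht
          | succ k ih => intro t ht; rw [zpow_add_one, ← mul_assoc]; exact inv1 _ (ih t ht)
          | pred k ih => intro t ht; rw [zpow_sub_one, ← mul_assoc]; exact inv2 _ (ih t ht)
        refine ⟨(x.toAdd - y.toAdd).natAbs, ?_, fun k hk => ha.1 ?_⟩
        · rw [Int.natAbs_ne_zero, sub_ne_zero]
          exact hxy
        · obtain ⟨l, hl⟩ : ∃ l : ℤ, k ^ (x.toAdd - y.toAdd).natAbs * (x * y⁻¹) ^ l = 1 := by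
            have : (x.toAdd - y.toAdd) ∣ ((x.toAdd - y.toAdd).natAbs : ℤ) :=
              Int.dvd_natAbs_self
            obtain ⟨l, hl⟩ := this
            refine ⟨-(l * k.toAdd), ?_⟩
            apply Multiplicative.toAdd.injective
            simp only [toAdd_mul, toAdd_pow, toAdd_zpow, toAdd_inv, toAdd_one, nsmul_eq_mul, hl,
              smul_eq_mul]
            ring
          have := inv l _ hk
          rwa [mul_assoc, hl, mul_one] at this
    refine ⟨m * m', mul_ne_zero hm hm', fun k hk => ?_⟩
    rw [Set.sUnion_insert] at hk
    rcases hk with hk | hk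
    · exact hmT (k ^ m) (by rwa [← pow_mul])
    · exact hmF (k ^ m') (by rwa [← pow_mul, mul_comm m'])

/-- If `(a, g)` is not in the product, then neither is `(a', g)` for any `a'` congruent to `a`
modulo some fixed number. This reduces the claim to the product of a finite cyclic group and the
free group. -/
theorem listSep_int_prod : ListSep (Multiplicative ℤ × FreeGroup α) := by
  rintro L hL ⟨a, g⟩ hag
  obtain ⟨V, _, M, P, hP, hS⟩ := exists_pathSystem L hL g
  have hS' : ∀ c, c ∈ M.Sol ⊥ P ↔ (c, g) ∈ prodSet L := by
    intro c
    rw [hS]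
    constructor
    · rintro ⟨x, hx, hxg⟩
      rw [Subgroup.mem_bot, mul_inv_eq_one] at hxg
      exact hxg ▸ hx
    · exact fun h => ⟨g, h, by simp⟩
  obtain ⟨m, hm, hmS⟩ := exists_modulus (M.isCosetUnion_sol L.length P hP.le) a
    (fun h => hag ((hS' a).1 h))
  have : NeZero m := ⟨hm⟩
  let q : Multiplicative ℤ × FreeGroup α →* Multiplicative (ZMod m) × FreeGroup α :=
    MonoidHom.prodMap (AddMonoidHom.toMultiplicative (Int.castAddHom (ZMod m))) (MonoidHom.id _)
  have hq := listSep_finite_prod (α := α) (Multiplicative (ZMod m)) (L.map (Subgroup.map q)) (by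
    intro K hK
    obtain ⟨H, hH, rfl⟩ := List.mem_map.1 hK
    exact fg_map q (hL H hH))
  rw [prodSet_map] at hq
  obtain ⟨N, h1, h2, h3⟩ := separated_comap q hq (a, g) (by
    rintro ⟨⟨b, x⟩, hb, hbq⟩
    obtain rfl : x = g := congrArg Prod.snd hbq
    have h4 : ((b.toAdd : ℤ) : ZMod m) = (a.toAdd : ℤ) := congrArg Prod.fst hbq
    rw [ZMod.intCast_eq_intCast_iff_dvd_sub] at h4
    obtain ⟨k, hk⟩ := h4
    refine hmS (Multiplicative.ofAdd (-k)) ((hS' _).2 ?_)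
    convert hb using 2
    apply Multiplicative.toAdd.injective
    simp only [toAdd_mul, toAdd_pow, toAdd_ofAdd, nsmul_eq_mul]
    linarith)
  exact ⟨N, h1, h2, fun n hn hc => h3 n hn ⟨_, hc, rfl⟩⟩

end ZTimesFree

/-! ### A criterion for being virtually a product of the integers and a free group -/

section Dihedral

variable {A : Type} [Group A]

/-- Suppose a subgroup of finite index is generated by elements `a j` and a central element `z`
with infinite order in an infinite cyclic quotient, and that `θ` kills `z` and has on the `a j`
values in a free group, with `μ` as a partial inverse. Then that subgroup embeds in
`ℤ × FreeGroup I`: modulo `z` it is embedded by `θ`, and `ℓ` is injective on the powers of `z`. -/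
theorem listSep_of_virtually {I ι Q : Type} [Finite I] [Group Q] (z : A)
    (hz : ∀ x, z * x = x * z) (ℓ : A →* Multiplicative ℤ) (hℓ : ℓ z ≠ 1) (θ : A →* Q)
    (e : FreeGroup I →* Q) (he : Function.Injective e) (a : ι → A) (b : ι → FreeGroup I)
    (hθz : θ z = 1) (hθa : ∀ j, θ (a j) = e (b j)) (μ : FreeGroup I →* A)
    (hμ : ∀ j, μ (b j) = a j) (hJ : (Subgroup.closure (insert z (Set.range a))).FiniteIndex) :
    ListSep A := by
  have hzc : ∀ (n : ℤ) x, z ^ n * x = x * z ^ n := fun n x => (Commute.zpow_left (hz x) n).eq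
  have key : ∀ k ∈ Subgroup.closure (insert z (Set.range a)),
      ∃ y, θ k = e y ∧ ∃ n : ℤ, k = μ y * z ^ n := by
    intro k hk
    induction hk using Subgroup.closure_induction with
    | mem x hx =>
      rcases hx with rfl | ⟨j, rfl⟩
      · exact ⟨1, by rw [hθz, map_one], 1, by simp⟩
      · exact ⟨b j, hθa j, 0, by simp [hμ]⟩
    | one => exact ⟨1, by simp, 0, by simp⟩
    | mul x y _ _ hx hy =>
      obtain ⟨u, h1, n, rfl⟩ := hx
      obtain ⟨v, h2, m, rfl⟩ := hy
      refine ⟨u * v, by rw [map_mul, h1, h2, map_mul], n + m, ?_⟩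
      rw [map_mul, zpow_add, mul_assoc, ← mul_assoc (z ^ n), hzc]
      simp only [mul_assoc]
    | inv x _ hx =>
      obtain ⟨u, h1, n, rfl⟩ := hx
      refine ⟨u⁻¹, by rw [map_inv, h1, map_inv], -n, ?_⟩
      rw [mul_inv_rev, ← zpow_neg, hzc, map_inv]
  choose! y hy using key
  let J := Subgroup.closure (insert z (Set.range a))
  let φ : J →* FreeGroup I := MonoidHom.mk' (fun k => y k) fun k l => he (by
    rw [map_mul, ← (hy _ k.2).1, ← (hy _ l.2).1, ← (hy _ (k * l).2).1, Subgroup.coe_mul, map_mul])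
  refine ListSep.of_finiteIndex J (listSep_int_prod.of_injective
    ((ℓ.comp J.subtype).prod φ) ((injective_iff_map_eq_one _).2 ?_))
  rintro ⟨k, hk⟩ h
  obtain ⟨h1, h2⟩ := Prod.mk.inj (h : (ℓ k, y k) = (1, 1))
  have h1 : ℓ k = 1 := h1
  have h2 : y k = 1 := h2
  obtain ⟨n, hn⟩ := (hy k hk).2
  rw [h2, map_one, one_mul] at hn
  rw [hn, map_zpow] at h1
  have h0 : n = 0 := by
    have h3 : n * (ℓ z).toAdd = 0 := by simpa using congrArg Multiplicative.toAdd h1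
    exact (mul_eq_zero.1 h3).resolve_right hℓ
  subst h0
  exact Subtype.ext (by simpa using hn)

/-- In a group generated by `p` and `q`, normality of a subgroup is checked by conjugating its
generators by `p`, `q` and their inverses. -/
theorem normal_closure_of_conj {S : Set A} {p q : A} (hpq : Subgroup.closure {p, q} = ⊤)
    (hp : ∀ s ∈ S, p * s * p⁻¹ ∈ Subgroup.closure S)
    (hp' : ∀ s ∈ S, p⁻¹ * s * p ∈ Subgroup.closure S)
    (hq : ∀ s ∈ S, q * s * q⁻¹ ∈ Subgroup.closure S)
    (hq' : ∀ s ∈ S, q⁻¹ * s * q ∈ Subgroup.closure S) : (Subgroup.closure S).Normal := by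
  have conj : ∀ g, (∀ s ∈ S, g * s * g⁻¹ ∈ Subgroup.closure S) →
      ∀ h ∈ Subgroup.closure S, g * h * g⁻¹ ∈ Subgroup.closure S := by
    intro g hg h hh
    have : Subgroup.closure S ≤ (Subgroup.closure S).comap (MulAut.conj g).toMonoidHom :=
      (Subgroup.closure_le _).2 fun s hs => hg s hs
    exact this hh
  have norm : ∀ g, (∀ s ∈ S, g * s * g⁻¹ ∈ Subgroup.closure S) →
      (∀ s ∈ S, g⁻¹ * s * g ∈ Subgroup.closure S) →
      g ∈ Subgroup.normalizer (Subgroup.closure S : Set A) := by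
    intro g hg hg'
    refine Subgroup.mem_normalizer_iff.2 fun h => ⟨conj g hg h, fun hh => ?_⟩
    have := conj g⁻¹ (by simpa using hg') _ hh
    rwa [show g⁻¹ * (g * h * g⁻¹) * g⁻¹⁻¹ = h by group] at this
  rw [← Subgroup.normalizer_eq_top_iff, eq_top_iff, ← hpq, Subgroup.closure_le]
  rintro g (rfl | rfl)
  · exact norm _ hp hp'
  · exact norm _ hq hq'

/-- The quotient is generated by two commuting elements of finite order. -/
theorem finiteIndex_of_normal {J : Subgroup A} [J.Normal] {p q : A}
    (hpq : Subgroup.closure {p, q} = ⊤) {m n : ℕ} (hm : 0 < m) (hn : 0 < n) (hp : p ^ m ∈ J)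
    (hq : q ^ n ∈ J) (hc : p * q * p⁻¹ * q⁻¹ ∈ J) : J.FiniteIndex := by
  have fin : ∀ (g : A) (k : ℕ), 0 < k → g ^ k ∈ J →
      (Subgroup.zpowers (QuotientGroup.mk' J g) : Set (A ⧸ J)).Finite := fun g k hk hg =>
    finite_zpowers.2 (isOfFinOrder_iff_pow_eq_one.2 ⟨k, hk, by
      rw [← map_pow]; exact (QuotientGroup.eq_one_iff _).2 hg⟩)
  have comm : Commute (QuotientGroup.mk' J p) (QuotientGroup.mk' J q) := by
    have : QuotientGroup.mk' J (p * q * p⁻¹ * q⁻¹) = 1 := (QuotientGroup.eq_one_iff _).2 hc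
    rw [map_mul, map_mul, map_inv, map_inv, mul_inv_eq_one, mul_inv_eq_iff_eq_mul, map_mul] at this
    exact this
  have all : ∀ g : A, ∃ i j : ℤ, QuotientGroup.mk' J p ^ i * QuotientGroup.mk' J q ^ j =
      QuotientGroup.mk' J g := by
    intro g
    have hg : g ∈ Subgroup.closure {p, q} := hpq ▸ Subgroup.mem_top g
    induction hg using Subgroup.closure_induction with
    | mem x hx =>
      rcases hx with rfl | rfl
      · exact ⟨1, 0, by simp⟩
      · exact ⟨0, 1, by simp⟩
    | one => exact ⟨0, 0, by simp⟩
    | mul x y _ _ hx hy =>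
      obtain ⟨i, j, h1⟩ := hx
      obtain ⟨i', j', h2⟩ := hy
      refine ⟨i + i', j + j', ?_⟩
      rw [map_mul, ← h1, ← h2, zpow_add, zpow_add, mul_assoc, mul_assoc,
        ← mul_assoc (QuotientGroup.mk' J p ^ i'), (comm.zpow_zpow i' j).eq, mul_assoc]
    | inv x _ hx =>
      obtain ⟨i, j, h1⟩ := hx
      refine ⟨-i, -j, ?_⟩
      rw [map_inv, ← h1, mul_inv_rev, ← zpow_neg, ← zpow_neg, (comm.zpow_zpow _ _).eq]
  have : Finite (A ⧸ J) := by
    rw [← Set.finite_univ_iff]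
    refine (Set.Finite.image2 (· * ·) (fin p m hm hp) (fin q n hn hq)).subset fun x _ => ?_
    obtain ⟨g, rfl⟩ := QuotientGroup.mk'_surjective J x
    obtain ⟨i, j, h⟩ := all g
    exact ⟨_, ⟨i, rfl⟩, _, ⟨j, rfl⟩, h⟩
  exact Subgroup.finiteIndex_of_finite_quotient

/-- Conjugates by powers of an element with central `n`-th power depend on exponents modulo `n`. -/
theorem conj_zpow_mod {n : ℕ} {x : A} (hx : ∀ y, x ^ n * y = y * x ^ n) (j : ℤ) (w : A) :
    x ^ (j % n) * w * (x ^ (j % n))⁻¹ = x ^ j * w * (x ^ j)⁻¹ := by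
  have h : x ^ j = x ^ (j % n) * (x ^ n) ^ (j / n) := by
    rw [← zpow_natCast, ← zpow_mul, ← zpow_add, Int.emod_add_mul_ediv]
  have hc := (Commute.zpow_left (hx w) (j / n)).eq
  calc x ^ (j % n) * w * (x ^ (j % n))⁻¹
      = x ^ (j % n) * (w * (x ^ n) ^ (j / n)) * ((x ^ n) ^ (j / n))⁻¹ * (x ^ (j % n))⁻¹ := by
        simp only [mul_assoc, mul_inv_cancel_left]
    _ = x ^ j * w * (x ^ j)⁻¹ := by
        rw [h, ← hc, mul_inv_rev]
        simp only [mul_assoc]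

/-! ### Shifting and inverting free generators -/

variable {n : ℕ}

/-- The cyclic shift of the free generators indexed by `ZMod n`. -/
def shiftGens (n : ℕ) : MulAut (FreeGroup (ZMod n)) := FreeGroup.freeGroupCongr (Equiv.addRight 1)

theorem shiftGens_of (i : ZMod n) : shiftGens n (FreeGroup.of i) = FreeGroup.of (i + 1) := by
  simp [shiftGens]

theorem shiftGens_zpow_of (j : ℤ) (i : ZMod n) :
    (shiftGens n ^ j) (FreeGroup.of i) = FreeGroup.of (i + j) := by
  induction j generalizing i with
  | zero => simp
  | succ j ih =>
    rw [zpow_add_one, MulAut.mul_apply, shiftGens_of, ih]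
    push_cast
    ring_nf
  | pred j ih =>
    have : (shiftGens n)⁻¹ (FreeGroup.of i) = FreeGroup.of (i - 1) := by
      rw [MulAut.inv_apply, MulEquiv.symm_apply_eq, shiftGens_of, sub_add_cancel]
    rw [zpow_sub_one, MulAut.mul_apply, this, ih]
    push_cast
    ring_nf

theorem shiftGens_pow_self : shiftGens n ^ n = 1 := by
  apply MulEquiv.toMonoidHom_injective
  ext i
  have := shiftGens_zpow_of (n := n) n i
  simpa using this

/-- The automorphism of the free group inverting each generator. -/
def invGens (I : Type) : MulAut (FreeGroup I) :=
  MonoidHom.toMulEquiv (FreeGroup.lift fun i => (FreeGroup.of i)⁻¹)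
    (FreeGroup.lift fun i => (FreeGroup.of i)⁻¹) (by ext; simp) (by ext; simp)

theorem invGens_of {I : Type} (i : I) : invGens I (FreeGroup.of i) = (FreeGroup.of i)⁻¹ := by
  simp [invGens]

theorem invGens_mul_self (I : Type) : invGens I * invGens I = 1 := by
  apply MulEquiv.toMonoidHom_injective
  ext i
  simp [invGens_of]

theorem invGens_commute : Commute (shiftGens n) (invGens (ZMod n)) := by
  apply MulEquiv.toMonoidHom_injective
  ext i
  simp [invGens_of, shiftGens_of]

/-- The holomorph of a free group. -/
abbrev Hol (I : Type) : Type :=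
  FreeGroup I ⋊[MonoidHom.id (MulAut (FreeGroup I))] MulAut (FreeGroup I)

theorem hol_conj {I : Type} (f : MulAut (FreeGroup I)) (x : FreeGroup I) :
    (SemidirectProduct.inr f : Hol I) * SemidirectProduct.inl x * (SemidirectProduct.inr f)⁻¹ =
      SemidirectProduct.inl (f x) := by
  have := SemidirectProduct.inl_aut (φ := MonoidHom.id (MulAut (FreeGroup I))) f x
  rw [← map_inv]
  exact this.symm

/-! ### Dihedral Artin groups -/

/-- With `x = s t`, the element `x ^ k` is central, and modulo it the conjugates of `s` by powers
of `x` are free generators of a normal subgroup. -/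
theorem listSep_even {k : ℕ} (hk : 0 < k) {s t : A} (hgen : Subgroup.closure {s, t} = ⊤)
    (hrel : (s * t) ^ k = (t * s) ^ k)
    (hlift : ∀ (Q : Type) [Group Q] (s' t' : Q), (s' * t') ^ k = (t' * s') ^ k →
      ∃ f : A →* Q, f s = s' ∧ f t = t') : ListSep A := by
  have : NeZero k := ⟨hk.ne'⟩
  obtain ⟨x, hx⟩ : ∃ x, x = s * t := ⟨_, rfl⟩
  have ht : t = s⁻¹ * x := by rw [hx]; group
  have hgen' : Subgroup.closure {x, s} = ⊤ := by
    rw [eq_top_iff, ← hgen, Subgroup.closure_le]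
    have h1 : x ∈ Subgroup.closure {x, s} := Subgroup.subset_closure (by simp)
    have h2 : s ∈ Subgroup.closure {x, s} := Subgroup.subset_closure (by simp)
    rintro g (rfl | rfl)
    · exact h2
    · rw [ht]; exact Subgroup.mul_mem _ (Subgroup.inv_mem _ h2) h1
  have hzs : x ^ k * s = s * x ^ k := by
    have : t * s = s⁻¹ * x * s⁻¹⁻¹ := by rw [hx]; group
    rw [← hx, this, conj_pow] at hrel
    rw [inv_inv, mul_assoc, eq_inv_mul_iff_mul_eq] at hrel
    exact hrel.symm
  have hz : ∀ g, x ^ k * g = g * x ^ k := by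
    intro g
    have hg : g ∈ Subgroup.closure {x, s} := hgen' ▸ Subgroup.mem_top g
    have : Subgroup.closure {x, s} ≤ Subgroup.centralizer {x ^ k} := by
      rw [Subgroup.closure_le]
      rintro g (rfl | rfl)
      · exact Subgroup.mem_centralizer_singleton_iff.2 (by rw [← pow_succ, ← pow_succ'])
      · exact Subgroup.mem_centralizer_singleton_iff.2 hzs.symm
    exact (Subgroup.mem_centralizer_singleton_iff.1 (this hg)).symm
  obtain ⟨ℓ, hs, hℓt⟩ := hlift (Multiplicative ℤ) (Multiplicative.ofAdd 1)
    (Multiplicative.ofAdd 1) rfl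
  -- `θ` sends `x` to the cyclic shift and `s` to a free generator.
  obtain ⟨θ, hθs, hθt⟩ := hlift (Hol (ZMod k)) (SemidirectProduct.inl (FreeGroup.of 0))
    ((SemidirectProduct.inl (FreeGroup.of 0))⁻¹ * SemidirectProduct.inr (shiftGens k)) (by
      have h1 : (SemidirectProduct.inr (shiftGens k) : Hol (ZMod k)) ^ k = 1 := by
        rw [← map_pow, shiftGens_pow_self, map_one]
      rw [mul_inv_cancel_left, h1]
      have := conj_pow (i := k) (a := (SemidirectProduct.inl (FreeGroup.of 0) : Hol (ZMod k))⁻¹)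
        (b := SemidirectProduct.inr (shiftGens k))
      rw [inv_inv] at this
      rw [this, h1]
      group)
  have hθx : θ x = SemidirectProduct.inr (shiftGens k) := by
    rw [hx, map_mul, hθs, hθt, mul_inv_cancel_left]
  let a : ℤ → A := fun j => x ^ j * s * (x ^ j)⁻¹
  have hJ : ∀ j, a j ∈ Subgroup.closure (insert (x ^ k) (Set.range a)) := fun j =>
    Subgroup.subset_closure (Or.inr ⟨j, rfl⟩)
  have hJz : x ^ k ∈ Subgroup.closure (insert (x ^ k) (Set.range a)) :=
    Subgroup.subset_closure (Or.inl rfl)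
  have hJs : s ∈ Subgroup.closure (insert (x ^ k) (Set.range a)) := by simpa [a] using hJ 0
  refine listSep_of_virtually (x ^ k) hz ℓ ?_ θ SemidirectProduct.inl
    SemidirectProduct.inl_injective a (fun j => FreeGroup.of ((j : ℤ) : ZMod k)) ?_ ?_
    (FreeGroup.lift fun i => a i.val) ?_ ?_
  · rw [hx, map_pow, map_mul, hs, hℓt]
    intro h
    have := congrArg Multiplicative.toAdd h
    simp only [toAdd_pow, toAdd_mul, toAdd_ofAdd, toAdd_one, nsmul_eq_mul] at this
    omega
  · rw [map_pow, hθx, ← map_pow, shiftGens_pow_self, map_one]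
  · intro j
    simp only [a]
    rw [map_mul, map_mul, map_inv, map_zpow, hθx, hθs, ← map_zpow, hol_conj, shiftGens_zpow_of,
      zero_add]
  · intro j
    rw [FreeGroup.lift_apply_of, ZMod.val_intCast]
    exact conj_zpow_mod hz j s
  · have : (Subgroup.closure (insert (x ^ k) (Set.range a))).Normal := by
      refine normal_closure_of_conj hgen' ?_ ?_ ?_ ?_
      · rintro _ (rfl | ⟨j, rfl⟩)
        · rwa [← hz, mul_inv_cancel_right]
        · convert hJ (j + 1) using 1
          simp only [a]
          group
      · rintro _ (rfl | ⟨j, rfl⟩)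
        · rwa [← hz, inv_mul_cancel_right]
        · convert hJ (j - 1) using 1
          simp only [a]
          group
      · rintro g hg
        exact Subgroup.mul_mem _ (Subgroup.mul_mem _ hJs (Subgroup.subset_closure hg))
          (Subgroup.inv_mem _ hJs)
      · rintro g hg
        exact Subgroup.mul_mem _ (Subgroup.mul_mem _ (Subgroup.inv_mem _ hJs)
          (Subgroup.subset_closure hg)) hJs
    refine finiteIndex_of_normal hgen' hk one_pos hJz (by simpa using hJs) ?_
    refine Subgroup.mul_mem _ ?_ (Subgroup.inv_mem _ hJs)
    simpa [a] using hJ 1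

/-- With `x = s t` and `y = x ^ k s`, the element `y ^ 2 = x ^ (2 k + 1)` is central; modulo it the
group is a free product of two cyclic groups, and the commutators of `y` with the powers of `x`
generate a free normal subgroup. -/
theorem listSep_odd {k : ℕ} {s t : A} (hgen : Subgroup.closure {s, t} = ⊤)
    (hrel : (s * t) ^ k * s = (t * s) ^ k * t)
    (hlift : ∀ (Q : Type) [Group Q] (s' t' : Q), (s' * t') ^ k * s' = (t' * s') ^ k * t' →
      ∃ f : A →* Q, f s = s' ∧ f t = t') : ListSep A := by
  have swap : ∀ {Q : Type} [Group Q] (s t : Q), (t * s) ^ k * t = t * (s * t) ^ k := by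
    intro Q _ s t
    have : t * s = t * (s * t) * t⁻¹ := by group
    rw [this, conj_pow, inv_mul_cancel_right]
  obtain ⟨x, hx⟩ : ∃ x, x = s * t := ⟨_, rfl⟩
  obtain ⟨y, hy⟩ : ∃ y, y = x ^ k * s := ⟨_, rfl⟩
  have hs : s = (x ^ k)⁻¹ * y := by rw [hy]; group
  have ht : t = s⁻¹ * x := by rw [hx]; group
  have hgen' : Subgroup.closure {x, y} = ⊤ := by
    rw [eq_top_iff, ← hgen, Subgroup.closure_le]
    have h1 : x ∈ Subgroup.closure {x, y} := Subgroup.subset_closure (by simp)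
    have h2 : y ∈ Subgroup.closure {x, y} := Subgroup.subset_closure (by simp)
    have h3 : s ∈ Subgroup.closure {x, y} := by
      rw [hs]; exact Subgroup.mul_mem _ (Subgroup.inv_mem _ (Subgroup.pow_mem _ h1 k)) h2
    rintro g (rfl | rfl)
    · exact h3
    · rw [ht]; exact Subgroup.mul_mem _ (Subgroup.inv_mem _ h3) h1
  have hyy : y * y = x ^ (2 * k + 1) := by
    have h1 : y = t * x ^ k := by rw [hy, hx, hrel, swap]
    calc y * y = x ^ k * (s * t) * x ^ k := by
          conv_lhs => rw [h1]
          rw [← h1]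
          nth_rewrite 1 [hy]
          rw [h1]
          simp only [mul_assoc]
      _ = x ^ (2 * k + 1) := by
          rw [← hx, ← pow_succ, ← pow_add]
          congr 1
          omega
  obtain ⟨m, hm⟩ : ∃ m, m = 2 * k + 1 := ⟨_, rfl⟩
  have : NeZero m := ⟨by omega⟩
  rw [← hm] at hyy
  have hz : ∀ g, x ^ m * g = g * x ^ m := by
    intro g
    have hg : g ∈ Subgroup.closure {x, y} := hgen' ▸ Subgroup.mem_top g
    have : Subgroup.closure {x, y} ≤ Subgroup.centralizer {x ^ m} := by
      rw [Subgroup.closure_le]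
      rintro g (rfl | rfl)
      · exact Subgroup.mem_centralizer_singleton_iff.2 (by rw [← pow_succ, ← pow_succ'])
      · exact Subgroup.mem_centralizer_singleton_iff.2 (by rw [← hyy, mul_assoc])
    exact (Subgroup.mem_centralizer_singleton_iff.1 (this hg)).symm
  have hyc : ∀ g, (y * y)⁻¹ * g = g * (y * y)⁻¹ := fun g => by
    rw [hyy]; exact (Commute.inv_left (hz g)).eq
  obtain ⟨ℓ, hℓs, hℓt⟩ := hlift (Multiplicative ℤ) (Multiplicative.ofAdd 1)
    (Multiplicative.ofAdd 1) rfl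
  obtain ⟨X, hX⟩ : ∃ X : Hol (ZMod m), X = SemidirectProduct.inr (shiftGens m) := ⟨_, rfl⟩
  obtain ⟨Y, hY⟩ : ∃ Y : Hol (ZMod m), Y = SemidirectProduct.inl (FreeGroup.of 0) *
    SemidirectProduct.inr (invGens (ZMod m)) := ⟨_, rfl⟩
  have hXm : X ^ m = 1 := by rw [hX, ← map_pow, shiftGens_pow_self, map_one]
  have hinv : (SemidirectProduct.inr (invGens (ZMod m)) : Hol (ZMod m))⁻¹ =
      SemidirectProduct.inr (invGens (ZMod m)) := by
    rw [inv_eq_iff_mul_eq_one, ← map_mul, invGens_mul_self, map_one]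
  have hYY : Y * Y = 1 := by
    have h := hol_conj (invGens (ZMod m)) (FreeGroup.of (0 : ZMod m))
    rw [hinv, invGens_of, map_inv] at h
    rw [hY, mul_assoc, ← mul_assoc (SemidirectProduct.inr (invGens (ZMod m))), h, mul_inv_cancel]
  -- The images of `s` and `t` are chosen such that `θ x = X` and `θ y = Y`.
  obtain ⟨θ, hθs, hθt⟩ := hlift (Hol (ZMod m)) ((X ^ k)⁻¹ * Y) (Y⁻¹ * X ^ (k + 1)) (by
    have h1 : (X ^ k)⁻¹ * Y * (Y⁻¹ * X ^ (k + 1)) = X := by rw [pow_succ]; group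
    rw [swap ((X ^ k)⁻¹ * Y) (Y⁻¹ * X ^ (k + 1)), h1, mul_inv_cancel_left, mul_assoc, ← pow_add,
      show k + 1 + k = m by omega, hXm, mul_one, eq_inv_iff_mul_eq_one, hYY])
  have hθx : θ x = X := by
    rw [hx, map_mul, hθs, hθt, pow_succ]
    group
  have hθy : θ y = Y := by rw [hy, map_mul, map_pow, hθx, hθs, mul_inv_cancel_left]
  let a : ℤ → A := fun j => x ^ j * y * (x ^ j)⁻¹ * y⁻¹
  have ha0 : a 0 = 1 := by simp [a]
  have hJ : ∀ j, a j ∈ Subgroup.closure (insert (x ^ m) (Set.range a)) := fun j =>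
    Subgroup.subset_closure (Or.inr ⟨j, rfl⟩)
  have hJz : x ^ m ∈ Subgroup.closure (insert (x ^ m) (Set.range a)) :=
    Subgroup.subset_closure (Or.inl rfl)
  refine listSep_of_virtually (x ^ m) hz ℓ ?_ θ SemidirectProduct.inl
    SemidirectProduct.inl_injective a
    (fun j => FreeGroup.of ((j : ℤ) : ZMod m) * (FreeGroup.of 0)⁻¹) ?_ ?_
    (FreeGroup.lift fun i => a i.val) ?_ ?_
  · rw [hx, map_pow, map_mul, hℓs, hℓt]
    intro h
    have := congrArg Multiplicative.toAdd h
    simp only [toAdd_pow, toAdd_mul, toAdd_ofAdd, toAdd_one, nsmul_eq_mul] at this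
    omega
  · rw [map_pow, hθx, hXm]
  · intro j
    have h1 : X ^ j * SemidirectProduct.inl (FreeGroup.of 0) * (X ^ j)⁻¹ =
        SemidirectProduct.inl (FreeGroup.of (j : ZMod m)) := by
      rw [hX, ← map_zpow, hol_conj, shiftGens_zpow_of, zero_add]
    have h2 : X ^ j * SemidirectProduct.inr (invGens (ZMod m)) * (X ^ j)⁻¹ =
        SemidirectProduct.inr (invGens (ZMod m)) := by
      rw [mul_inv_eq_iff_eq_mul, hX, ← map_zpow, ← map_mul, ← map_mul,
        (invGens_commute.zpow_left j).eq]
    simp only [a]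
    rw [map_mul, map_mul, map_mul, map_inv, map_inv, map_zpow, hθx, hθy]
    calc X ^ j * Y * (X ^ j)⁻¹ * Y⁻¹
        = (X ^ j * SemidirectProduct.inl (FreeGroup.of 0) * (X ^ j)⁻¹) *
          (X ^ j * SemidirectProduct.inr (invGens (ZMod m)) * (X ^ j)⁻¹) * Y⁻¹ := by
          rw [hY]; group
      _ = _ := by
          rw [h1, h2, hY, map_mul, map_inv]; group
  · intro j
    rw [map_mul, map_inv, FreeGroup.lift_apply_of, FreeGroup.lift_apply_of, ZMod.val_intCast,
      ZMod.val_zero, Nat.cast_zero, ha0, inv_one, mul_one]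
    exact congrArg (· * y⁻¹) (conj_zpow_mod hz j y)
  · have : (Subgroup.closure (insert (x ^ m) (Set.range a))).Normal := by
      refine normal_closure_of_conj hgen' ?_ ?_ ?_ ?_
      · rintro _ (rfl | ⟨j, rfl⟩)
        · rwa [← hz, mul_inv_cancel_right]
        · convert Subgroup.mul_mem _ (hJ (j + 1)) (Subgroup.inv_mem _ (hJ 1)) using 1
          simp only [a]
          group
      · rintro _ (rfl | ⟨j, rfl⟩)
        · rwa [← hz, inv_mul_cancel_right]
        · convert Subgroup.mul_mem _ (hJ (j - 1)) (Subgroup.inv_mem _ (hJ (-1))) using 1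
          simp only [a]
          group
      · rintro _ (rfl | ⟨j, rfl⟩)
        · rwa [← hz, mul_inv_cancel_right]
        · convert Subgroup.inv_mem _ (hJ j) using 1
          calc y * (x ^ j * y * (x ^ j)⁻¹ * y⁻¹) * y⁻¹
              = y * x ^ j * y * ((x ^ j)⁻¹ * (y * y)⁻¹) := by group
            _ = (a j)⁻¹ := by rw [← hyc]; simp only [a]; group
      · rintro _ (rfl | ⟨j, rfl⟩)
        · rwa [← hz, inv_mul_cancel_right]
        · convert Subgroup.inv_mem _ (hJ j) using 1
          calc y⁻¹ * (x ^ j * y * (x ^ j)⁻¹ * y⁻¹) * y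
              = y * ((y * y)⁻¹ * x ^ j) * y * (x ^ j)⁻¹ := by group
            _ = (a j)⁻¹ := by rw [hyc]; simp only [a]; group
    refine finiteIndex_of_normal hgen' (NeZero.pos m) two_pos hJz ?_ ?_
    · rwa [pow_two, hyy]
    · simpa [a] using hJ 1

/-- Dihedral Artin groups with nonzero label are virtually `ℤ × F` with `F` free. -/
theorem listSep_artinDihedral {m : ℕ} (hm : 0 < m) : ListSep (ArtinDihedral m) := by
  let s : ArtinDihedral m := PresentedGroup.of true
  let t : ArtinDihedral m := PresentedGroup.of false
  have hgen : Subgroup.closure {s, t} = ⊤ := by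
    rw [eq_top_iff, ← PresentedGroup.closure_range_of]
    refine Subgroup.closure_mono ?_
    rintro _ ⟨b, rfl⟩
    cases b
    · exact Or.inr rfl
    · exact Or.inl rfl
  have hmap : ∀ {M N : Type} [Group M] [Group N] (f : M →* N) (a b : M),
      f (prodWord a b m) = prodWord (f a) (f b) m := by
    intro M N _ _ f a b
    simp [prodWord]
  have hrel : prodWord s t m = prodWord t s m := by
    have h := PresentedGroup.one_of_mem (rels := ({ prodWord (FreeGroup.of true)
      (FreeGroup.of false) m * (prodWord (FreeGroup.of false) (FreeGroup.of true) m)⁻¹ } :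
      Set (FreeGroup Bool))) (Set.mem_singleton _)
    rw [map_mul, map_inv, mul_inv_eq_one, hmap, hmap] at h
    exact h
  have hlift : ∀ (Q : Type) [Group Q] (s' t' : Q), prodWord s' t' m = prodWord t' s' m →
      ∃ f : ArtinDihedral m →* Q, f s = s' ∧ f t = t' := by
    intro Q _ s' t' h
    refine ⟨PresentedGroup.toGroup (f := fun b => cond b s' t') ?_, ?_, ?_⟩
    · rintro _ rfl
      rw [map_mul, map_inv, mul_inv_eq_one, hmap, hmap]
      simpa using h
    · exact PresentedGroup.toGroup.of _
    · exact PresentedGroup.toGroup.of _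
  obtain ⟨k, rfl | rfl⟩ := m.even_or_odd'
  · simp only [prodWord, Nat.mul_div_cancel_left k two_pos, Nat.mul_mod_right, pow_zero,
      mul_one] at hrel hlift
    exact listSep_even (by omega) hgen hrel hlift
  · have h1 : (2 * k + 1) / 2 = k := by omega
    have h2 : (2 * k + 1) % 2 = 1 := by omega
    simp only [prodWord, h1, h2, pow_one] at hrel hlift
    exact listSep_odd hgen hrel hlift

end Dihedral

/-- `ℤ × F_n` is product separable; consequently any group commensurable with `ℤ × F_n`
(in particular any dihedral Artin group with label `m > 2`) is product separable. -/
theorem zxfree_product_separable (n : ℕ) :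
    ProductSeparable (Multiplicative ℤ × FreeGroup (Fin n)) ∧
      (∀ (G : Type) [Group G],
        (∃ (H : Subgroup G) (K : Subgroup (Multiplicative ℤ × FreeGroup (Fin n))),
          H.FiniteIndex ∧ K.FiniteIndex ∧ Nonempty (↥H ≃* ↥K)) →
        ProductSeparable G) ∧
      (∀ m : ℕ, 2 < m → ProductSeparable (ArtinDihedral m)) := by
  refine ⟨productSeparable_iff.2 listSep_int_prod, ?_,
    fun m hm => productSeparable_iff.2 (listSep_artinDihedral (by omega))⟩
  rintro G _ ⟨H, K, _, _, ⟨e⟩⟩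
  refine productSeparable_iff.2 (ListSep.of_finiteIndex H ?_)
  exact (listSep_int_prod (α := Fin n)).of_injective (K.subtype.comp e.toMonoidHom)
    (K.subtype_injective.comp e.injective)
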